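/- For any real numbers d₁ > 0, d₂ > 0, d₃ > 0, any nonnegative integer λ, and constants C₁, C₂, C₃ > 0, there are only finitely many positive integers k for which there exist integers α, β, γ ≥ 1, ι ≥ 0 with |α − λk| ≤ C₁k^{1−d₁}, ι ≤ C₂k^{1−d₂}, β ≤ C₃·k·log^{d₃}k, such that the set of primes p with α ≤ p ≤ β has exactly γφ(k) + ι elements and contains at least γ primes in each invertible residue class modulo k. -/

import Mathlib

open Complex in
lemma cpow_neg_sub_bound {n : ℕ} (hn : 1 ≤ n) {s : ℂ} (hs : 0 < s.re) {x y : ℝ}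
    (hx : x ∈ Set.Icc (n:ℝ) (n+1)) (hy : y ∈ Set.Icc (n:ℝ) (n+1)) :
    ‖((y:ℝ):ℂ)^(-s) - ((x:ℝ):ℂ)^(-s)‖ ≤ ‖s‖ * (n:ℝ)^(-s.re-1) := by
  have hn0 : (0:ℝ) < n := by exact_mod_cast hn
  have key := (convex_Icc (n:ℝ) (n+1)).norm_image_sub_le_of_norm_hasDerivWithin_le
    (f := fun u : ℝ => (u:ℂ)^(-s)) (f' := fun u : ℝ => -s * (u:ℂ)^(-s-1))
    (C := ‖s‖ * (n:ℝ)^(-s.re-1)) ?_ ?_ hx hy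
  · refine key.trans ?_
    have h1 : ‖y - x‖ ≤ 1 := by
      rw [Real.norm_eq_abs, abs_le]; constructor <;> linarith [hx.1, hx.2, hy.1, hy.2]
    exact mul_le_of_le_one_right (by positivity) h1
  · intro u hu
    have hu0 : 0 < u := lt_of_lt_of_le hn0 hu.1
    have hs0 : -s ≠ 0 := by
      intro h; rw [neg_eq_zero] at h; simp [h] at hs
    exact (hasDerivAt_ofReal_cpow_const hu0.ne' hs0).hasDerivWithinAt
  · intro u hu
    have hu0 : 0 < u := lt_of_lt_of_le hn0 hu.1
    rw [norm_mul, norm_neg, Complex.norm_cpow_eq_rpow_re_of_pos hu0]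
    have : (-s-1).re = -s.re-1 := by simp
    rw [this]
    gcongr ?_ * ?_
    exact Real.rpow_le_rpow_of_nonpos hn0 hu.1 (by linarith)

noncomputable def eTerm (n : ℕ) (s : ℂ) : ℂ :=
  (s-1)*((n:ℂ)+1)^(-s) + ((n:ℂ)+1)^(1-s) - (n:ℂ)^(1-s)

lemma eTerm_bound {n : ℕ} (hn : 1 ≤ n) {s : ℂ} (hs : 0 < s.re) :
    ‖eTerm n s‖ ≤ ‖s-1‖ * ‖s‖ * (n:ℝ)^(-s.re-1) := by
  have hn0 : (0:ℝ) < n := by exact_mod_cast hn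
  by_cases h1 : s = 1
  · subst h1; simp [eTerm]
  have key := (convex_Icc (n:ℝ) (n+1)).norm_image_sub_le_of_norm_hasDerivWithin_le
    (f := fun u : ℝ => (s-1)*((n:ℂ)+1)^(-s) * u + (u:ℂ)^(1-s))
    (f' := fun u : ℝ => (s-1)*((n:ℂ)+1)^(-s) + (1-s) * (u:ℂ)^(1-s-1))
    (C := ‖s-1‖ * ‖s‖ * (n:ℝ)^(-s.re-1)) (x := n) (y := n+1) ?_ ?_ (by simp) (by simp)
  · have : ‖(n:ℝ) + 1 - n‖ = 1 := by simp
    rw [this, mul_one] at key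
    refine le_trans (le_of_eq ?_) key
    congr 1
    unfold eTerm; push_cast; ring
  · intro u hu
    have hu0 : 0 < u := lt_of_lt_of_le hn0 hu.1
    have hs0 : 1-s ≠ 0 := by
      intro h; apply h1; linear_combination -h
    have := (hasDerivAt_ofReal_cpow_const hu0.ne' hs0).hasDerivWithinAt (s := Set.Icc (n:ℝ) (n+1))
    have h2 : HasDerivWithinAt (fun u : ℝ => (s-1)*((n:ℂ)+1)^(-s) * (u:ℂ)) ((s-1)*((n:ℂ)+1)^(-s) * 1)
       (Set.Icc (n:ℝ) (n+1)) u := by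
      exact (Complex.ofRealCLM.hasDerivAt.hasDerivWithinAt).const_mul _
    rw [mul_one] at h2
    exact h2.add this
  · intro u hu
    have e : (s-1)*((n:ℂ)+1)^(-s) + (1-s) * (u:ℂ)^(1-s-1)
       = (s-1) * ((((n:ℝ)+1 : ℝ):ℂ)^(-s) - (u:ℂ)^(-s)) := by
      have : 1 - s - 1 = -s := by ring
      rw [this]; push_cast; ring
    rw [e, norm_mul, mul_assoc]
    gcongr
    exact cpow_neg_sub_bound hn hs hu (by simp)

lemma eTerm_differentiable {n : ℕ} (hn : 1 ≤ n) : Differentiable ℂ (eTerm n) := by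
  have h1 : (n:ℂ) ≠ 0 := by exact_mod_cast (by omega : n ≠ 0)
  have h2 : (n:ℂ)+1 ≠ 0 := by exact_mod_cast (by omega : n+1 ≠ 0)
  intro s
  unfold eTerm
  refine ((((differentiableAt_id.sub_const 1).mul ?_).add ?_).sub ?_)
  · exact (differentiableAt_id.neg).const_cpow (Or.inl h2)
  · exact (differentiableAt_id.const_sub 1).const_cpow (Or.inl h2)
  · exact (differentiableAt_id.const_sub 1).const_cpow (Or.inl h1)

lemma summable_eTerm_bound {M : ℕ} (hM : 1 ≤ M) {σ : ℝ} (hσ : 0 < σ) :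
    Summable fun i : ℕ => (((M + i : ℕ):ℝ))^(-σ-1) := by
  have : Summable fun i : ℕ => ((i:ℝ))^(-σ-1) := Real.summable_nat_rpow.2 (by linarith)
  have := (summable_nat_add_iff M).2 this
  simpa [add_comm] using this

lemma zeta1_formula_gt {M : ℕ} (hM : 1 ≤ M) {s : ℂ} (hs : 1 < s.re) :
    riemannZeta₁ s = (s-1) * ∑ n ∈ Finset.range M, ((n:ℂ)+1)^(-s) + (M:ℂ)^(1-s)
      + ∑' i, eTerm (M+i) s := by
  have hs1 : s ≠ 1 := by rintro rfl; simp at hs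
  have hz : HasSum (fun n : ℕ => ((n:ℂ)+1)^(-s)) (riemannZeta s) := by
    rw [zeta_eq_tsum_one_div_nat_add_one_cpow hs]
    have : Summable (fun n : ℕ => 1 / ((n:ℂ)+1)^s) := by
      have := (summable_nat_add_iff 1).2 (Complex.summable_one_div_nat_cpow.2 hs)
      simpa using this
    convert this.hasSum using 2
    rw [Complex.cpow_neg, one_div]
  have ht : HasSum (fun i : ℕ => (((M+i:ℕ):ℂ)+1)^(-s))
      (riemannZeta s - ∑ n ∈ Finset.range M, ((n:ℂ)+1)^(-s)) := by
    have := (hasSum_nat_add_iff' M).2 hz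
    simpa [add_comm, add_left_comm] using this
  have htel : HasSum (fun i : ℕ => (((M+i:ℕ):ℂ)+1)^(1-s) - ((M+i:ℕ):ℂ)^(1-s)) (-(M:ℂ)^(1-s)) := by
    have hsum : Summable (fun i : ℕ => (((M+i:ℕ):ℂ)+1)^(1-s) - ((M+i:ℕ):ℂ)^(1-s)) := by
      have e : Summable (fun i => eTerm (M+i) s) := by
        refine Summable.of_norm_bounded (g := fun i => ‖s-1‖*‖s‖*(((M + i : ℕ):ℝ))^(-s.re-1)) ?_ ?_
        · exact (summable_eTerm_bound hM (by linarith)).mul_left _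
        · intro i; exact eTerm_bound (by omega) (by linarith)
      have := e.sub (ht.summable.mul_left (s-1))
      refine this.congr fun i => ?_
      simp only [eTerm]; push_cast; ring
    rw [hsum.hasSum_iff_tendsto_nat]
    have : ∀ n : ℕ, ∑ i ∈ Finset.range n, ((((M+i:ℕ):ℂ)+1)^(1-s) - ((M+i:ℕ):ℂ)^(1-s))
       = ((M+n:ℕ):ℂ)^(1-s) - (M:ℂ)^(1-s) := by
      intro n
      have := Finset.sum_range_sub (fun i : ℕ => ((M+i:ℕ):ℂ)^(1-s)) n
      simpa [add_assoc] using this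
    simp_rw [this]
    rw [← zero_sub]
    refine Filter.Tendsto.sub_const ?_ _
    rw [tendsto_zero_iff_norm_tendsto_zero]
    have h3 : ∀ n : ℕ, ‖((M+n:ℕ):ℂ)^(1-s)‖ = ((n+M:ℕ):ℝ)^(-(s.re-1)) := by
      intro n
      have : (0:ℝ) < ((M+n:ℕ):ℝ) := by exact_mod_cast (by omega)
      have h := Complex.norm_cpow_eq_rpow_re_of_pos this (1-s)
      rw [← Complex.ofReal_natCast, h]
      simp [add_comm]
    simp_rw [h3]
    have := (tendsto_rpow_neg_atTop (y := s.re-1) (by linarith)).comp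
      (tendsto_natCast_atTop_atTop (R := ℝ))
    exact (Filter.tendsto_add_atTop_iff_nat (f := fun n : ℕ => (n:ℝ)^(-(s.re-1))) M).2 this
  have := (ht.mul_left (s-1)).add htel
  have h4 : HasSum (fun i => eTerm (M+i) s) ((s - 1) * (riemannZeta s - ∑ n ∈ Finset.range M, ((n:ℂ) + 1) ^ (-s)) + -(M:ℂ) ^ (1 - s)) := by
    have e : (fun i => eTerm (M+i) s) = fun i => (s - 1) * (((M+i:ℕ):ℂ)+1)^(-s)
        + ((((M+i:ℕ):ℂ)+1)^(1-s) - ((M+i:ℕ):ℂ)^(1-s)) := by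
      funext i; unfold eTerm; ring
    rw [e]; exact this
  rw [h4.tsum_eq]
  have := riemannZeta_eq_inv_sub_mul hs1
  have h5 : s - 1 ≠ 0 := sub_ne_zero.2 hs1
  have : riemannZeta₁ s = (s-1) * riemannZeta s := by rw [this]; field_simp
  rw [this]; ring

lemma zeta1_formula {M : ℕ} (hM : 1 ≤ M) {s : ℂ} (hs : 0 < s.re) :
    riemannZeta₁ s = (s-1) * ∑ n ∈ Finset.range M, ((n:ℂ)+1)^(-s) + (M:ℂ)^(1-s)
      + ∑' i, eTerm (M+i) s := by
  have hU : IsOpen {z : ℂ | 0 < z.re} := isOpen_lt continuous_const Complex.continuous_re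
  have hV : IsOpen {z : ℂ | 1 < z.re} := isOpen_lt continuous_const Complex.continuous_re
  have hconn : IsPreconnected {z : ℂ | 0 < z.re} := (convex_halfSpace_re_gt 0).isPreconnected
  have hM1 : (M:ℂ) ≠ 0 := by exact_mod_cast (by omega : M ≠ 0)
  have hd : DifferentiableOn ℂ (fun s => ∑' i, eTerm (M+i) s) {z : ℂ | 0 < z.re} := by
    intro z hz
    have hz' : 0 < z.re := hz
    -- local bound
    set W : Set ℂ := {w : ℂ | z.re/2 < w.re} ∩ Metric.ball 0 (‖z‖+1) with hW
    have hWo : IsOpen W := (isOpen_lt continuous_const Complex.continuous_re).inter Metric.isOpen_ball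
    have hzW : z ∈ W := ⟨by simp; linarith, by simp⟩
    have : DifferentiableOn ℂ (fun s => ∑' i, eTerm (M+i) s) W := by
      refine Complex.differentiableOn_tsum_of_summable_norm
        (u := fun i => (‖z‖+2)*(‖z‖+1)*(((M + i : ℕ):ℝ))^(-(z.re/2)-1)) ?_ ?_ hWo ?_
      · exact (summable_eTerm_bound hM (by linarith)).mul_left _
      · intro i; exact (eTerm_differentiable (by omega)).differentiableOn
      · intro i w hw
        have hw1 : z.re/2 < w.re := hw.1
        have hw2 : ‖w‖ < ‖z‖+1 := by simpa using hw.2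
        refine (eTerm_bound (n := M+i) (by omega) (by linarith)).trans ?_
        have h1 : (1:ℝ) ≤ ((M+i:ℕ):ℝ) := by exact_mod_cast (by omega)
        gcongr
        · calc ‖w-1‖ ≤ ‖w‖+‖(1:ℂ)‖ := norm_sub_le _ _
            _ ≤ _ := by rw [norm_one]; linarith
    exact (this.differentiableAt (hWo.mem_nhds hzW)).differentiableWithinAt
  have hf : AnalyticOnNhd ℂ riemannZeta₁ {z : ℂ | 0 < z.re} :=
    differentiable_riemannZeta₁.differentiableOn.analyticOnNhd hU
  have hg : AnalyticOnNhd ℂ (fun s => (s-1) * ∑ n ∈ Finset.range M, ((n:ℂ)+1)^(-s) + (M:ℂ)^(1-s)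
      + ∑' i, eTerm (M+i) s) {z : ℂ | 0 < z.re} := by
    refine DifferentiableOn.analyticOnNhd ?_ hU
    refine DifferentiableOn.add ?_ hd
    refine Differentiable.differentiableOn ?_
    intro z
    refine ((differentiableAt_id.sub_const 1).mul ?_).add ((differentiableAt_id.const_sub 1).const_cpow (Or.inl hM1))
    refine DifferentiableAt.fun_sum fun n _ => ?_
    exact (differentiableAt_id.neg).const_cpow (Or.inl (by exact_mod_cast (by omega : n+1 ≠ 0)))
  have := hf.eqOn_of_preconnected_of_eventuallyEq hg hconn (z₀ := 2) (by simp) ?_ hs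
  · exact this
  · filter_upwards [hV.mem_nhds (show (2:ℂ) ∈ {z : ℂ | 1 < z.re} by simp)] with w hw
    exact zeta1_formula_gt hM hw


/-- zeta upper bound -/
lemma zeta_upper {ε : ℝ} (hε : 0 < ε) (hε2 : ε ≤ 1/2) :
    ∃ C > 0, ∀ s : ℂ, 1 - ε ≤ s.re → s.re ≤ 4 → 1 ≤ |s.im| →
      ‖riemannZeta s‖ ≤ C * |s.im|^(2*ε) := by
  have hS : Summable fun n : ℕ => ((n:ℝ))^(-1-ε) := Real.summable_nat_rpow.2 (by linarith)
  set S : ℝ := ∑' n : ℕ, ((n:ℝ))^(-1-ε) with hSdef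
  have hS0 : 0 ≤ S := tsum_nonneg fun n => by positivity
  refine ⟨2 * (S + 1 + 5*S), by positivity, fun s h1 h2 h3 => ?_⟩
  set t := |s.im| with ht
  set M : ℕ := ⌈t⌉₊ with hMdef
  have hM : 1 ≤ M := by rw [hMdef]; exact Nat.one_le_ceil_iff.2 (by linarith)
  have hM0 : (1:ℝ) ≤ M := by exact_mod_cast hM
  have htM : t ≤ M := Nat.le_ceil t
  have hMt : (M:ℝ) ≤ 2*t := by
    have := Nat.ceil_lt_add_one (show 0 ≤ t by linarith)
    rw [← hMdef] at this; linarith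
  have hs1 : s ≠ 1 := by
    rintro rfl; norm_num at ht; linarith
  have hs1' : s - 1 ≠ 0 := sub_ne_zero.2 hs1
  have hn1 : t ≤ ‖s-1‖ := by
    have := Complex.abs_im_le_norm (s-1); simpa using this
  have hns : ‖s‖ ≤ 5 * M := by
    have := Complex.norm_le_abs_re_add_abs_im s
    have : |s.re| ≤ 4 := abs_le.2 ⟨by linarith, h2⟩
    linarith
  -- partial sum
  have hA : ‖∑ n ∈ Finset.range M, ((n:ℂ)+1)^(-s)‖ ≤ (M:ℝ)^(2*ε) * S := by
    calc ‖∑ n ∈ Finset.range M, ((n:ℂ)+1)^(-s)‖ ≤ ∑ n ∈ Finset.range M, ‖((n:ℂ)+1)^(-s)‖ := norm_sum_le _ _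
      _ ≤ ∑ n ∈ Finset.range M, (M:ℝ)^(2*ε) * ((n+1:ℕ):ℝ)^(-1-ε) := by
          refine Finset.sum_le_sum fun n hn => ?_
          have hn' : n + 1 ≤ M := by simpa using hn
          have hp : (0:ℝ) < ((n+1:ℕ):ℝ) := by positivity
          have hp1 : (1:ℝ) ≤ ((n+1:ℕ):ℝ) := by exact_mod_cast (by omega)
          have e : ((n:ℂ)+1)^(-s) = ((((n+1:ℕ):ℝ):ℂ))^(-s) := by push_cast; rfl
          rw [e, Complex.norm_cpow_eq_rpow_re_of_pos hp]
          calc ((n+1:ℕ):ℝ)^((-s).re) ≤ ((n+1:ℕ):ℝ)^(2*ε + (-1-ε)) := by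
                apply Real.rpow_le_rpow_of_exponent_le hp1; simp; linarith
            _ = ((n+1:ℕ):ℝ)^(2*ε) * ((n+1:ℕ):ℝ)^(-1-ε) := Real.rpow_add hp _ _
            _ ≤ _ := by
                gcongr
      _ = (M:ℝ)^(2*ε) * ∑ n ∈ Finset.range M, ((n+1:ℕ):ℝ)^(-1-ε) := by rw [Finset.mul_sum]
      _ ≤ (M:ℝ)^(2*ε) * S := by
          gcongr
          have := hS.sum_le_tsum (Finset.range (M+1)) (fun n _ => by positivity)
          rw [Finset.sum_range_succ'] at this
          refine le_trans ?_ this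
          have : (0:ℝ) ≤ ((0:ℕ):ℝ)^(-1-ε) := by positivity
          linarith
  have hB : ‖(M:ℂ)^(1-s)‖ ≤ (M:ℝ)^(2*ε) := by
    have hp : (0:ℝ) < M := by linarith
    rw [← Complex.ofReal_natCast, Complex.norm_cpow_eq_rpow_re_of_pos hp]
    apply Real.rpow_le_rpow_of_exponent_le hM0; simp; linarith
  have hC : ‖∑' i, eTerm (M+i) s‖ ≤ ‖s-1‖ * ‖s‖ * ((M:ℝ)^(-1+2*ε) * S) := by
    have hsumm : Summable fun i : ℕ => ((M+i:ℕ):ℝ)^(-1-ε) := by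
      have := (summable_nat_add_iff M).2 hS
      simpa [add_comm] using this
    have hle : ∀ i : ℕ, ‖eTerm (M+i) s‖ ≤ ‖s-1‖ * ‖s‖ * ((M:ℝ)^(-1+2*ε) * ((M+i:ℕ):ℝ)^(-1-ε)) := by
      intro i
      refine (eTerm_bound (n := M+i) (by omega) (by linarith)).trans ?_
      have hp1 : (1:ℝ) ≤ ((M+i:ℕ):ℝ) := by exact_mod_cast (by omega)
      have hp : (0:ℝ) < ((M+i:ℕ):ℝ) := by linarith
      gcongr ?_ * ?_
      calc ((M+i:ℕ):ℝ)^(-s.re-1) ≤ ((M+i:ℕ):ℝ)^((-1+2*ε) + (-1-ε)) := by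
            apply Real.rpow_le_rpow_of_exponent_le hp1; linarith
        _ = ((M+i:ℕ):ℝ)^(-1+2*ε) * ((M+i:ℕ):ℝ)^(-1-ε) := Real.rpow_add hp _ _
        _ ≤ _ := by
            gcongr ?_ * _
            apply Real.rpow_le_rpow_of_nonpos (by linarith) _ (by linarith)
            push_cast; linarith [(Nat.cast_nonneg i : (0:ℝ) ≤ i)]
    refine (tsum_of_norm_bounded ((hsumm.mul_left _).mul_left _).hasSum hle).trans ?_
    rw [tsum_mul_left, tsum_mul_left]
    gcongr
    have := hS.sum_add_tsum_nat_add M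
    rw [hSdef, ← this]
    have h0 : 0 ≤ ∑ i ∈ Finset.range M, (i:ℝ)^(-1-ε) := Finset.sum_nonneg fun n _ => by positivity
    have e : ∑' i : ℕ, ((M+i:ℕ):ℝ)^(-1-ε) = ∑' i : ℕ, ((i+M:ℕ):ℝ)^(-1-ε) := by
      simp [add_comm]
    rw [e]; linarith
  have hz : riemannZeta s = (∑ n ∈ Finset.range M, ((n:ℂ)+1)^(-s)) + (s-1)⁻¹ * (M:ℂ)^(1-s)
      + (s-1)⁻¹ * ∑' i, eTerm (M+i) s := by
    rw [riemannZeta_eq_inv_sub_mul hs1, zeta1_formula hM (by linarith)]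
    field_simp
  have hMp : (M:ℝ)^(-1+2*ε) * M = (M:ℝ)^(2*ε) := by
    have hp : (0:ℝ) < M := by linarith
    rw [← Real.rpow_add_one hp.ne']; ring_nf
  have hMt2 : (M:ℝ)^(2*ε) ≤ 2 * t^(2*ε) := by
    calc (M:ℝ)^(2*ε) ≤ (2*t)^(2*ε) := by gcongr
      _ = 2^(2*ε) * t^(2*ε) := Real.mul_rpow (by norm_num) (by linarith)
      _ ≤ 2 * t^(2*ε) := by
        gcongr
        calc (2:ℝ)^(2*ε) ≤ 2^(1:ℝ) := Real.rpow_le_rpow_of_exponent_le (by norm_num) (by linarith)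
          _ = 2 := by simp
  have hinv : ‖(s-1)⁻¹‖ ≤ 1 := by
    rw [norm_inv]; exact inv_le_one_of_one_le₀ (by linarith)
  rw [hz]
  have hX : ‖(s-1)⁻¹ * ∑' i, eTerm (M+i) s‖ ≤ 5 * S * (M:ℝ)^(2*ε) := by
    rw [norm_mul]
    calc ‖(s-1)⁻¹‖ * ‖∑' i, eTerm (M+i) s‖ ≤ ‖(s-1)⁻¹‖ * (‖s-1‖ * ‖s‖ * ((M:ℝ)^(-1+2*ε) * S)) := by gcongr
      _ = ‖s‖ * ((M:ℝ)^(-1+2*ε) * S) := by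
        rw [norm_inv]; have : ‖s-1‖ ≠ 0 := norm_ne_zero_iff.2 hs1'
        field_simp
      _ ≤ (5*M) * ((M:ℝ)^(-1+2*ε) * S) := by gcongr
      _ = 5 * S * ((M:ℝ)^(-1+2*ε) * M) := by ring
      _ = _ := by rw [hMp]
  have hY : ‖(s-1)⁻¹ * (M:ℂ)^(1-s)‖ ≤ (M:ℝ)^(2*ε) := by
    rw [norm_mul]
    calc _ ≤ 1 * (M:ℝ)^(2*ε) := by gcongr
      _ = _ := one_mul _
  have hMpos : 0 ≤ (M:ℝ)^(2*ε) := by positivity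
  calc _ ≤ _ := norm_add₃_le
    _ ≤ (M:ℝ)^(2*ε) * S + (M:ℝ)^(2*ε) + 5 * S * (M:ℝ)^(2*ε) := by gcongr
    _ = (M:ℝ)^(2*ε) * (S + 1 + 5*S) := by ring
    _ ≤ (2 * t^(2*ε)) * (S + 1 + 5*S) := by gcongr
    _ = _ := by ring


lemma two_mul_rpow_le {t ε : ℝ} (ht : 0 ≤ t) (hε : 0 < ε) (hε2 : ε ≤ 1/2) :
    (2*t)^(2*ε) ≤ 2 * t^(2*ε) := by
  rw [Real.mul_rpow (by norm_num) ht]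
  gcongr
  calc (2:ℝ)^(2*ε) ≤ 2^(1:ℝ) := Real.rpow_le_rpow_of_exponent_le (by norm_num) (by linarith)
    _ = 2 := by simp

lemma zeta_deriv_upper {ε : ℝ} (hε : 0 < ε) (hε2 : ε ≤ 1/2) :
    ∃ D ≥ 1, ∀ s : ℂ, 1 - ε/2 ≤ s.re → s.re ≤ 3 → 2 ≤ |s.im| →
      ‖deriv riemannZeta s‖ ≤ D * |s.im|^(2*ε) := by
  obtain ⟨C, hC, h⟩ := zeta_upper hε hε2
  refine ⟨2*C/(ε/2) + 1, by linarith [show 0 < 2*C/(ε/2) by positivity], fun s h1 h2 h3 => ?_⟩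
  have key : ∀ z ∈ Metric.sphere s (ε/2), ‖riemannZeta z‖ ≤ C * (2 * |s.im|^(2*ε)) := by
    intro z hz
    have hz' : ‖z - s‖ = ε/2 := by simpa [dist_eq_norm] using hz
    have hr := (Complex.abs_re_le_norm (z-s)).trans hz'.le
    have hi := (Complex.abs_im_le_norm (z-s)).trans hz'.le
    simp only [Complex.sub_re, Complex.sub_im] at hr hi
    rw [abs_le] at hr
    have hi1 : |z.im| ≤ 2 * |s.im| := by
      have := abs_sub_abs_le_abs_sub z.im s.im
      linarith
    have hi2 : 1 ≤ |z.im| := by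
      have := abs_sub_abs_le_abs_sub s.im z.im
      rw [abs_sub_comm] at this
      linarith
    refine (h z (by linarith) (by linarith) hi2).trans ?_
    gcongr
    refine le_trans ?_ (two_mul_rpow_le (abs_nonneg _) hε hε2)
    gcongr
  have := Complex.norm_deriv_le_of_forall_mem_sphere_norm_le (c := s) (R := ε/2) (by positivity) ?_ key
  · refine this.trans ?_
    have e : C * (2 * |s.im| ^ (2 * ε)) / (ε / 2) = 2*C/(ε/2) * |s.im|^(2*ε) := by ring
    rw [e]
    gcongr; linarith
  · refine DifferentiableOn.diffContOnCl fun z hz => ?_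
    rw [closure_ball _ (by positivity)] at hz
    have hz' : ‖z - s‖ ≤ ε/2 := by simpa [dist_eq_norm] using hz
    have hi := (Complex.abs_im_le_norm (z-s)).trans hz'
    simp only [Complex.sub_im] at hi
    refine (differentiableAt_riemannZeta ?_).differentiableWithinAt
    rintro rfl
    simp at hi
    linarith

lemma zeta_real_upper : ∃ A > 0, ∀ x : ℝ, 0 < x → x ≤ 1 → ‖riemannZeta (1 + x)‖ ≤ A / x := by
  have hcont : ContinuousOn (fun x : ℝ => riemannZeta₁ (1+x)) (Set.Icc 0 1) := by
    have : Continuous riemannZeta₁ := differentiable_riemannZeta₁.continuous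
    fun_prop
  obtain ⟨A, hA⟩ := isCompact_Icc.exists_bound_of_continuousOn hcont
  refine ⟨|A|+1, by positivity, fun x hx hx1 => ?_⟩
  have hne : (1 + (x:ℂ)) ≠ 1 := by simpa using hx.ne'
  rw [riemannZeta_eq_inv_sub_mul hne]
  have h := hA x ⟨hx.le, hx1⟩
  rw [norm_mul, norm_inv]
  have : ‖(1:ℂ) + x - 1‖ = x := by simp [abs_of_pos hx]
  rw [this, div_eq_inv_mul]
  gcongr
  exact h.trans ((le_abs_self A).trans (by linarith))

lemma zeta_341 {x : ℝ} (hx : 0 < x) (y : ℝ) :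
    1 ≤ ‖riemannZeta (1+x)‖^3 * ‖riemannZeta (1+x+Complex.I*y)‖^4 *
      ‖riemannZeta (1+x+2*Complex.I*y)‖ := by
  have := DirichletCharacter.norm_LFunction_product_ge_one (N := 1) (1 : DirichletCharacter ℂ 1) hx y
  simpa [DirichletCharacter.LFunctionTrivChar, DirichletCharacter.LFunction_modOne_eq] using this

lemma zeta_lower {ε : ℝ} (hε : 0 < ε) (hε2 : ε ≤ 1/2) :
    ∃ c > 0, c ≤ ε/2 ∧ ∀ s : ℂ, 2 ≤ |s.im| → 1 - c * |s.im|^(-(10*ε)) ≤ s.re → s.re ≤ 2 →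
      c * |s.im|^(-(10*ε)) ≤ ‖riemannZeta s‖ := by
  obtain ⟨C, hC, hup⟩ := zeta_upper hε hε2
  obtain ⟨D, hD, hder⟩ := zeta_deriv_upper hε hε2
  obtain ⟨A, hA, hre⟩ := zeta_real_upper
  set a : ℝ := 1 / (A^3 * (2*C)) with ha
  have ha0 : 0 < a := by positivity
  -- 341 bound
  have h341 : ∀ (x t y : ℝ), 0 < x → x ≤ 1 → t = |y| → 2 ≤ t →
      a * x^3 ≤ ‖riemannZeta (1+x+Complex.I*y)‖^4 * t^(2*ε) := by
    intro x t y hx hx1 hty ht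
    have h := zeta_341 hx y
    have h1 := hre x hx hx1
    have him : |(1+x+2*Complex.I*y : ℂ).im| = 2*t := by simp [hty, abs_mul]
    have h2 := hup (1+x+2*Complex.I*y) (by simp; linarith) (by simp; linarith)
      (by rw [him]; linarith)
    rw [him] at h2
    have h3 : ‖riemannZeta (1+x+2*Complex.I*y)‖ ≤ C * (2 * t^(2*ε)) := by
      refine h2.trans ?_
      gcongr
      exact two_mul_rpow_le (by linarith) hε hε2
    have h4 : 1 ≤ (A/x)^3 * ‖riemannZeta (1+x+Complex.I*y)‖^4 * (C * (2 * t^(2*ε))) := by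
      refine h.trans ?_
      gcongr
    rw [ha]
    have e : (A/x)^3 * ‖riemannZeta (1+x+Complex.I*y)‖^4 * (C * (2 * t^(2*ε)))
       = (A^3 * (2*C)) / x^3 * (‖riemannZeta (1+x+Complex.I*y)‖^4 * t^(2*ε)) := by
      field_simp
    rw [e] at h4
    rw [div_mul_eq_mul_div, one_mul, div_le_iff₀ (by positivity)]
    rw [div_mul_eq_mul_div, le_div_iff₀ (by positivity), one_mul] at h4
    linarith
  set c : ℝ := min (ε/2) (a / (81 * D^4)) with hc
  have hc0 : 0 < c := by rw [hc]; positivity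
  have hc1 : c ≤ ε/2 := min_le_left _ _
  have hc2 : 81 * D^4 * c ≤ a := by
    have : c ≤ a / (81 * D^4) := min_le_right _ _
    rw [le_div_iff₀ (by positivity)] at this; linarith
  refine ⟨c, hc0, hc1, fun s him hlo hhi => ?_⟩
  set t := |s.im| with ht
  have ht0 : 0 < t := by linarith
  set η := c * t^(-(10*ε)) with hη
  have hη0 : 0 < η := by positivity
  have ht1 : t^(-(10*ε)) ≤ 1 := Real.rpow_le_one_of_one_le_of_nonpos (by linarith) (by linarith)
  have hηc : η ≤ c := mul_le_of_le_one_right hc0.le ht1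
  have ht2 : 1 ≤ t^(2*ε) := Real.one_le_rpow (by linarith) (by linarith)
  -- main lower bound for x ≥ η
  have hmain : ∀ x : ℝ, η ≤ x → x ≤ 1 → 3 * η * D * t^(2*ε) ≤ ‖riemannZeta (1+x+Complex.I*s.im)‖ := by
    intro x hx hx1
    have hx0 : 0 < x := by linarith
    have h := h341 x t s.im hx0 hx1 rfl him
    have hpow : t^(2*ε) * (t^(2*ε))^4 * t^(-(10*ε)) = 1 := by
      rw [← Real.rpow_natCast, ← Real.rpow_mul ht0.le, ← Real.rpow_add ht0, ← Real.rpow_add ht0]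
      convert Real.rpow_zero t using 2; push_cast; ring
    have : (3 * η * D * t^(2*ε))^4 * t^(2*ε) ≤ ‖riemannZeta (1+x+Complex.I*s.im)‖^4 * t^(2*ε) := by
      refine le_trans ?_ h
      calc (3 * η * D * t^(2*ε))^4 * t^(2*ε) = (81 * D^4 * c) * η^3 * (t^(2*ε) * (t^(2*ε))^4 * t^(-(10*ε))) := by
            rw [hη]; ring
        _ = (81 * D^4 * c) * η^3 := by rw [hpow, mul_one]
        _ ≤ a * x^3 := by gcongr
    have h5 := le_of_mul_le_mul_right this (by positivity)
    exact le_of_pow_le_pow_left₀ (by norm_num) (norm_nonneg _) h5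
  have hηD : η ≤ η * D * t^(2*ε) := by
    have : 1 ≤ D * t^(2*ε) := one_le_mul_of_one_le_of_one_le hD ht2
    rw [mul_assoc]
    exact le_mul_of_one_le_right hη0.le this
  by_cases hcase : 1 + η ≤ s.re
  · have h := hmain (s.re - 1) (by linarith) (by linarith)
    have e : (1:ℂ) + ((s.re-1:ℝ):ℂ) + Complex.I * s.im = s := by
      apply Complex.ext <;> simp
    rw [e] at h
    nlinarith
  · push Not at hcase
    have h := hmain η le_rfl (by linarith)
    set s' : ℂ := 1 + (η:ℂ) + Complex.I * s.im with hs'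
    have hs're : s'.re = 1 + η := by simp [hs']
    have hs'im : s'.im = s.im := by simp [hs']
    have hmv : ‖riemannZeta s' - riemannZeta s‖ ≤ D * t^(2*ε) * ‖s' - s‖ := by
      set U : Set ℂ := segment ℝ s s'
      have hU : ∀ z ∈ U, z.im = s.im ∧ s.re ≤ z.re ∧ z.re ≤ 1 + η := by
        intro z hz
        simp only [U, segment_eq_image'] at hz
        obtain ⟨θ, hθ, rfl⟩ := hz
        simp only [Complex.add_im, Complex.add_re, Complex.smul_re, Complex.smul_im, Complex.sub_re,
          Complex.sub_im, hs're, hs'im, smul_eq_mul]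
        refine ⟨by ring, ?_, ?_⟩
        · nlinarith [hθ.1, hθ.2]
        · nlinarith [hθ.1, hθ.2]
      refine (convex_segment s s').norm_image_sub_le_of_norm_hasDerivWithin_le
        (f' := deriv riemannZeta) ?_ ?_ (left_mem_segment ℝ s s') (right_mem_segment ℝ s s')
      · intro z hz
        refine (differentiableAt_riemannZeta ?_).hasDerivAt.hasDerivWithinAt
        rintro rfl
        have := (hU 1 hz).1
        simp at this
        rw [← this] at ht; simp at ht; linarith
      · intro z hz
        obtain ⟨h1, h2, h3⟩ := hU z hz
        have := hder z (by linarith) (by linarith) (by rw [h1]; exact him)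
        rwa [h1] at this
    have hd : ‖s' - s‖ ≤ 2 * η := by
      have e : s' - s = ((1 + η - s.re : ℝ) : ℂ) := by
        apply Complex.ext <;> simp [hs're, hs'im]
      rw [e, Complex.norm_real, Real.norm_eq_abs, abs_of_pos (by linarith)]
      linarith
    have h6 : ‖riemannZeta s' - riemannZeta s‖ ≤ D * t^(2*ε) * (2*η) := by
      refine hmv.trans ?_; gcongr
    have h7 := norm_sub_norm_le (riemannZeta s') (riemannZeta s)
    nlinarith


noncomputable def Fx (s : ℂ) : ℂ := -(deriv riemannZeta₁ s / riemannZeta₁ s) - riemannZeta₀ s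

lemma zeta1_ne_zero {s : ℂ} (hs : 1 ≤ s.re) : riemannZeta₁ s ≠ 0 := by
  by_cases h : s = 1
  · subst h; simp
  · have := riemannZeta_ne_zero_of_one_le_re hs
    rw [riemannZeta_eq_inv_sub_mul h] at this
    exact right_ne_zero_of_mul this

lemma Fx_eq {s : ℂ} (hs : s ≠ 1) (hz : riemannZeta s ≠ 0) :
    Fx s = -(deriv riemannZeta s / riemannZeta s) - riemannZeta s := by
  have hs1 : s - 1 ≠ 0 := sub_ne_zero.2 hs
  have h1 : riemannZeta₁ s = (s-1) * riemannZeta s := by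
    rw [riemannZeta_eq_inv_sub_mul hs]; field_simp
  have hd : HasDerivAt riemannZeta₁ (1 * riemannZeta s + (s-1) * deriv riemannZeta s) s := by
    have h2 := ((hasDerivAt_id s).sub_const 1).mul (differentiableAt_riemannZeta hs).hasDerivAt
    refine h2.congr_of_eventuallyEq ?_
    filter_upwards [isOpen_ne.mem_nhds hs] with w hw
    have hw1 : w - 1 ≠ 0 := sub_ne_zero.2 hw
    simp only [Pi.mul_apply, id]
    rw [riemannZeta_eq_inv_sub_mul hw]; field_simp
  have h0 : riemannZeta₀ s = riemannZeta s - (s-1)⁻¹ := by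
    rw [riemannZeta_eq_inv_sub_add hs]; ring
  unfold Fx
  rw [hd.deriv, h1, h0]
  field_simp
  ring

lemma Fx_differentiableAt {s : ℂ} (hs : riemannZeta₁ s ≠ 0) : DifferentiableAt ℂ Fx s := by
  unfold Fx
  have hd : Differentiable ℂ (deriv riemannZeta₁) := differentiable_riemannZeta₁.deriv
  exact (((hd s).div (differentiable_riemannZeta₁ s) hs).neg).sub (differentiable_riemannZeta₀ s)

lemma Fx_analyticAt {s : ℂ} (hs : riemannZeta₁ s ≠ 0) : AnalyticAt ℂ Fx s := by
  rw [Complex.analyticAt_iff_eventually_differentiableAt]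
  filter_upwards [differentiable_riemannZeta₁.continuous.continuousAt.eventually_ne hs] with w hw
  exact Fx_differentiableAt hw

lemma Fx_iter_bound_large (N : ℕ) : ∃ C ≥ 0, ∀ s : ℂ, 1 < s.re → s.re ≤ 3/2 → 3 ≤ |s.im| →
    ‖iteratedDeriv N Fx s‖ ≤ C * (2*|s.im|)^((1:ℝ)/2) := by
  set ε : ℝ := 1 / (24 * ((N:ℝ)+1)) with hεdef
  have hε : 0 < ε := by positivity
  have hε2 : ε ≤ 1/2 := by
    rw [hεdef, div_le_div_iff₀ (by positivity) (by norm_num)]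
    have : (0:ℝ) ≤ N := Nat.cast_nonneg N
    linarith
  obtain ⟨C, hC, hup⟩ := zeta_upper hε hε2
  obtain ⟨D, hD, hder⟩ := zeta_deriv_upper hε hε2
  obtain ⟨c, hc, hcε, hlow⟩ := zeta_lower hε hε2
  have hc4 : c ≤ 1/4 := by linarith
  refine ⟨N.factorial * (D/c + C) / c^N, by positivity, fun s h1 h2 h3 => ?_⟩
  set t := |s.im| with ht
  have ht2 : 1 ≤ 2*t := by linarith
  have ht0 : 0 < 2*t := by linarith
  set R : ℝ := c * (2*t)^(-(10*ε)) with hR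
  have hR0 : 0 < R := by positivity
  have hRc : R ≤ c := mul_le_of_le_one_right hc.le
    (Real.rpow_le_one_of_one_le_of_nonpos ht2 (by linarith))
  have hgeo : ∀ z ∈ Metric.closedBall s R, 2 ≤ |z.im| ∧ |z.im| ≤ 2*t ∧
      1 - c * |z.im|^(-(10*ε)) ≤ z.re ∧ z.re ≤ 2 ∧ 1 - ε/2 ≤ z.re := by
    intro z hz
    have hz' : ‖z - s‖ ≤ R := by simpa [dist_eq_norm] using hz
    have hr := (Complex.abs_re_le_norm (z-s)).trans hz'
    have hi := (Complex.abs_im_le_norm (z-s)).trans hz'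
    simp only [Complex.sub_re, Complex.sub_im] at hr hi
    rw [abs_le] at hr
    have hi1 : |z.im| ≤ 2 * t := by
      have := abs_sub_abs_le_abs_sub z.im s.im
      linarith
    have hi2 : 2 ≤ |z.im| := by
      have := abs_sub_abs_le_abs_sub s.im z.im
      rw [abs_sub_comm] at this
      linarith
    refine ⟨hi2, hi1, ?_, by linarith, by linarith⟩
    have : (2*t)^(-(10*ε)) ≤ |z.im|^(-(10*ε)) :=
      Real.rpow_le_rpow_of_nonpos (by linarith) hi1 (by linarith)
    have : R ≤ c * |z.im|^(-(10*ε)) := by rw [hR]; gcongr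
    linarith
  have hne : ∀ z ∈ Metric.closedBall s R, z ≠ 1 ∧ riemannZeta z ≠ 0 := by
    intro z hz
    obtain ⟨g1, g2, g3, g4, g5⟩ := hgeo z hz
    constructor
    · rintro rfl; norm_num at g1
    · intro h
      have := hlow z g1 g3 g4
      rw [h, norm_zero] at this
      have : 0 < c * |z.im|^(-(10*ε)) := by
        have : 0 < |z.im| := by linarith
        positivity
      linarith
  have hb : ∀ z ∈ Metric.sphere s R, ‖Fx z‖ ≤ (D/c + C) * (2*t)^(12*ε) := by
    intro z hz
    have hz := Metric.sphere_subset_closedBall hz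
    obtain ⟨g1, g2, g3, g4, g5⟩ := hgeo z hz
    obtain ⟨n1, n2⟩ := hne z hz
    have hz0 : 0 < |z.im| := by linarith
    rw [Fx_eq n1 n2]
    have b1 := hder z g5 (by linarith) g1
    have b2 := hlow z g1 g3 g4
    have b3 := hup z (by linarith) (by linarith) (by linarith)
    have b4 : ‖deriv riemannZeta z / riemannZeta z‖ ≤ D/c * |z.im|^(12*ε) := by
      rw [norm_div]
      calc ‖deriv riemannZeta z‖ / ‖riemannZeta z‖ ≤ (D * |z.im|^(2*ε)) / (c * |z.im|^(-(10*ε))) := by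
            gcongr
        _ = D/c * (|z.im|^(2*ε) / |z.im|^(-(10*ε))) := by field_simp
        _ = D/c * |z.im|^(12*ε) := by
          rw [← Real.rpow_sub hz0]; ring_nf
    have b5 : |z.im|^(2*ε) ≤ |z.im|^(12*ε) :=
      Real.rpow_le_rpow_of_exponent_le (by linarith) (by linarith)
    have b6 : |z.im|^(12*ε) ≤ (2*t)^(12*ε) := by gcongr
    calc _ ≤ ‖-(deriv riemannZeta z / riemannZeta z)‖ + ‖riemannZeta z‖ := norm_sub_le _ _
      _ ≤ D/c * |z.im|^(12*ε) + C * |z.im|^(12*ε) := by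
        rw [norm_neg]
        refine add_le_add b4 (b3.trans ?_)
        gcongr
      _ = (D/c + C) * |z.im|^(12*ε) := by ring
      _ ≤ _ := by gcongr
  have hdiff : DiffContOnCl ℂ Fx (Metric.ball s R) := by
    refine DifferentiableOn.diffContOnCl fun z hz => ?_
    rw [closure_ball _ hR0.ne'] at hz
    obtain ⟨n1, n2⟩ := hne z hz
    refine (Fx_differentiableAt ?_).differentiableWithinAt
    rw [riemannZeta_eq_inv_sub_mul n1] at n2
    exact right_ne_zero_of_mul n2
  have := Complex.norm_iteratedDeriv_le_of_forall_mem_sphere_norm_le N hR0 hdiff hb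
  refine this.trans ?_
  have hRN : R^N = c^N * (2*t)^(-(10*ε*N)) := by
    rw [hR, mul_pow, ← Real.rpow_natCast ((2*t)^(-(10*ε))), ← Real.rpow_mul ht0.le]; ring_nf
  have e1 : (N.factorial:ℝ) * ((D/c + C) * (2*t)^(12*ε)) / R^N
      = N.factorial * (D/c + C) / c^N * (2*t)^(12*ε + 10*ε*N) := by
    rw [hRN, Real.rpow_neg ht0.le, Real.rpow_add ht0]; field_simp
  rw [e1]
  gcongr
  · have : ε * (24 * ((N:ℝ)+1)) = 1 := by rw [hεdef]; field_simp
    have : (0:ℝ) ≤ N := Nat.cast_nonneg N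
    nlinarith

lemma Fx_iter_bound (N : ℕ) : ∃ C ≥ 0, ∀ s : ℂ, 1 < s.re → s.re ≤ 3/2 →
    ‖iteratedDeriv N Fx s‖ ≤ C * (1+|s.im|)^((1:ℝ)/2) := by
  obtain ⟨C, hC, h⟩ := Fx_iter_bound_large N
  have hcomp : IsCompact (Set.Icc (1:ℝ) (3/2) ×ℂ Set.Icc (-3:ℝ) 3) :=
    isCompact_Icc.reProdIm isCompact_Icc
  have hcont : ContinuousOn (iteratedDeriv N Fx) (Set.Icc (1:ℝ) (3/2) ×ℂ Set.Icc (-3:ℝ) 3) := by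
    intro z hz
    have hz1 : 1 ≤ z.re := hz.1.1
    have h2 := AnalyticAt.iterated_deriv (Fx_analyticAt (zeta1_ne_zero hz1)) N
    rw [iteratedDeriv_eq_iterate]
    exact h2.continuousAt.continuousWithinAt
  obtain ⟨B, hB⟩ := hcomp.exists_bound_of_continuousOn hcont
  refine ⟨2*C + |B|, by positivity, fun s h1 h2 => ?_⟩
  have hge : 1 ≤ (1+|s.im|)^((1:ℝ)/2) := Real.one_le_rpow (by linarith [abs_nonneg s.im]) (by norm_num)
  by_cases h3 : 3 ≤ |s.im|
  · refine (h s h1 h2 h3).trans ?_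
    have h4 : (2*|s.im|)^((1:ℝ)/2) ≤ 2 * (1+|s.im|)^((1:ℝ)/2) := by
      calc (2*|s.im|)^((1:ℝ)/2) ≤ (4*(1+|s.im|))^((1:ℝ)/2) :=
            Real.rpow_le_rpow (by positivity) (by linarith [abs_nonneg s.im]) (by norm_num)
        _ = 4^((1:ℝ)/2) * (1+|s.im|)^((1:ℝ)/2) := Real.mul_rpow (by norm_num) (by positivity)
        _ = 2 * (1+|s.im|)^((1:ℝ)/2) := by
          rw [← Real.sqrt_eq_rpow, show (4:ℝ) = 2^2 by norm_num, Real.sqrt_sq (by norm_num)]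
    have := mul_le_mul_of_nonneg_left h4 hC
    nlinarith [abs_nonneg B]
  · push Not at h3
    have := hB s ⟨⟨h1.le, h2⟩, abs_le.1 h3.le⟩
    have := this.trans (le_abs_self B)
    nlinarith [abs_nonneg B]


open MeasureTheory Complex in
noncomputable def pKer (s : ℂ) : ℂ := 1 / s - 1 / (s + 1)

noncomputable def pFun : ℝ → ℂ := fun t =>
  Set.indicator (Set.Ioc 0 1) (fun _ => (1:ℂ)) t - Set.indicator (Set.Ioc 0 1) (fun t : ℝ => (t:ℂ)^(1:ℂ)) t

lemma pFun_eq {t : ℝ} (ht : 0 < t) : pFun t = ((max (1 - t) 0 : ℝ) : ℂ) := by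
  unfold pFun
  by_cases h : t ≤ 1
  · have : t ∈ Set.Ioc (0:ℝ) 1 := ⟨ht, h⟩
    rw [Set.indicator_of_mem this, Set.indicator_of_mem this, max_eq_left (by linarith)]
    simp
  · have : t ∉ Set.Ioc (0:ℝ) 1 := fun h' => h h'.2
    rw [Set.indicator_of_notMem this, Set.indicator_of_notMem this, max_eq_right (by linarith)]
    simp

lemma pFun_mellin {s : ℂ} (hs : 0 < s.re) : HasMellin pFun s (pKer s) := by
  have h1 := hasMellin_one_Ioc hs
  have h2 := hasMellin_cpow_Ioc (1:ℂ) (s := s) (by simp; linarith)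
  have := hasMellin_sub h1.1 h2.1
  rw [h1.2, h2.2] at this
  exact this

lemma pKer_bound {σ : ℝ} (hσ : 1 ≤ σ) (t : ℝ) :
    ‖pKer (σ + t * Complex.I)‖ ≤ 4 * (1 + ‖t‖)^(-(2:ℝ)) := by
  set s : ℂ := σ + t * Complex.I with hs
  have hre : s.re = σ := by simp [hs]
  have him : s.im = t := by simp [hs]
  have hs0 : s ≠ 0 := by intro h; rw [h] at hre; simp at hre; linarith
  have hs1 : s + 1 ≠ 0 := by
    intro h; have := congrArg Complex.re h; simp [hre] at this; linarith
  have e : pKer s = 1 / (s * (s+1)) := by unfold pKer; field_simp; ring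
  have n1 : (1 + ‖t‖)/2 ≤ ‖s‖ := by
    have a := Complex.abs_re_le_norm s
    have b := Complex.abs_im_le_norm s
    rw [hre] at a; rw [him] at b
    rw [Real.norm_eq_abs]
    have := le_abs_self σ
    linarith
  have n2 : (1 + ‖t‖)/2 ≤ ‖s+1‖ := by
    have a := Complex.abs_re_le_norm (s+1)
    have b := Complex.abs_im_le_norm (s+1)
    simp only [Complex.add_re, Complex.add_im, Complex.one_re, Complex.one_im, hre, him] at a b
    rw [Real.norm_eq_abs]
    have := le_abs_self (σ+1)
    rw [add_zero] at b
    linarith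
  have hp : 0 < (1 + ‖t‖) := by positivity
  rw [e, norm_div, norm_mul, norm_one, Real.rpow_neg hp.le]
  have : (1 + ‖t‖)^(2:ℝ) = (1+‖t‖)^2 := by norm_cast
  rw [this]
  calc 1 / (‖s‖ * ‖s+1‖) ≤ 1 / ((1 + ‖t‖)/2 * ((1 + ‖t‖)/2)) := by gcongr
    _ = _ := by field_simp; norm_num

lemma pKer_continuous {σ : ℝ} (hσ : 1 ≤ σ) : Continuous (fun t : ℝ => pKer (σ + t * Complex.I)) := by
  unfold pKer
  refine Continuous.sub ?_ ?_
  · refine Continuous.div continuous_const (by fun_prop) fun t h => ?_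
    have := congrArg Complex.re h; simp at this; linarith
  · refine Continuous.div continuous_const (by fun_prop) fun t h => ?_
    have := congrArg Complex.re h; simp at this; linarith

open MeasureTheory

lemma pKer_integrable {σ : ℝ} (hσ : 1 ≤ σ) : Integrable (fun t : ℝ => pKer (σ + t * Complex.I)) := by
  have h := (integrable_one_add_norm (E := ℝ) (μ := volume) (r := 2) (by simp)).const_mul 4
  exact h.mono' (pKer_continuous hσ).aestronglyMeasurable (Filter.Eventually.of_forall fun t => pKer_bound hσ t)

lemma pKer_inv {σ : ℝ} (hσ : 1 ≤ σ) {y : ℝ} (hy : 0 < y) :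
    ∫ t : ℝ, (y:ℂ)^(-((σ:ℂ) + t * Complex.I)) * pKer (σ + t * Complex.I)
      = (2 * Real.pi) * ((max (1 - y) 0 : ℝ) : ℂ) := by
  have hm : ∀ t : ℝ, mellin pFun (σ + t * Complex.I) = pKer (σ + t * Complex.I) := fun t =>
    (pFun_mellin (by simp; linarith)).2
  have h := mellinInv_mellin_eq σ pFun hy (pFun_mellin (by simp; linarith)).1
    (by
      unfold Complex.VerticalIntegrable
      simp_rw [hm]
      exact pKer_integrable hσ)
    (by
      have : ContinuousAt (fun t : ℝ => ((max (1 - t) 0 : ℝ) : ℂ)) y := by fun_prop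
      refine this.congr ?_
      filter_upwards [lt_mem_nhds hy] with t ht
      rw [pFun_eq ht])
  rw [pFun_eq hy] at h
  unfold mellinInv at h
  simp_rw [hm, smul_eq_mul] at h
  rw [← h, Complex.real_smul]
  generalize (∫ (t : ℝ), (y:ℂ) ^ (-((σ:ℂ) + t * Complex.I)) * pKer (σ + t * Complex.I)) = J
  push_cast
  have : (Real.pi:ℂ) ≠ 0 := by exact_mod_cast Real.pi_ne_zero
  field_simp

noncomputable def K0 : ℝ := ∫ t : ℝ, 4 * (1 + ‖t‖)^(-(3/2:ℝ))

lemma perron_bound (a : ℕ → ℂ) {σ C : ℝ} (hσ : 1 ≤ σ) (hC : 0 ≤ C) (hs : LSeriesSummable a σ)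
    (hb : ∀ t : ℝ, ‖LSeries a (σ + t * Complex.I)‖ ≤ C * (1 + |t|)^((1:ℝ)/2)) {x : ℝ} (hx : 0 < x) :
    ‖∑ n ∈ Finset.Icc 1 ⌊x⌋₊, a n * ((1 - n / x : ℝ) : ℂ)‖ ≤ C * K0 * x^σ := by
  set F : ℕ → ℝ → ℂ := fun n t => LSeries.term a (σ + t * Complex.I) n *
    ((x:ℂ)^((σ:ℂ) + t * Complex.I) * pKer (σ + t * Complex.I)) with hF
  have hxn : ∀ t : ℝ, ‖(x:ℂ)^((σ:ℂ) + t * Complex.I)‖ = x^σ := by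
    intro t; rw [Complex.norm_cpow_eq_rpow_re_of_pos hx]; simp
  have hnorm : ∀ n t, ‖F n t‖ = ‖LSeries.term a σ n‖ * x^σ * ‖pKer (σ + t * Complex.I)‖ := by
    intro n t
    simp only [hF]
    rw [norm_mul, norm_mul, hxn, LSeries.norm_term_eq, LSeries.norm_term_eq]
    simp; ring
  have hcont : ∀ n, Continuous (F n) := by
    intro n
    simp only [hF]
    refine Continuous.mul ?_ (Continuous.mul ?_ (pKer_continuous hσ))
    · by_cases hn : n = 0
      · subst hn; simp [continuous_const]
      · simp only [LSeries.term_of_ne_zero hn]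
        have hn' : (n:ℂ) ≠ 0 := by exact_mod_cast hn
        refine Continuous.div continuous_const ?_ ?_
        · exact Continuous.const_cpow (by fun_prop) (Or.inl hn')
        · intro t; simp [Complex.cpow_eq_zero_iff, hn']
    · have hx' : (x:ℂ) ≠ 0 := by exact_mod_cast hx.ne'
      exact Continuous.const_cpow (by fun_prop) (Or.inl hx')
  have hIntg : ∀ n, Integrable (F n) := by
    intro n
    have := ((pKer_integrable hσ).norm).const_mul (‖LSeries.term a σ n‖ * x^σ)
    exact this.mono' (hcont n).aestronglyMeasurable (Filter.Eventually.of_forall fun t => (hnorm n t).le)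
  have hsumm : Summable fun n => ∫ t, ‖F n t‖ := by
    simp_rw [hnorm, integral_const_mul]
    exact (hs.norm.mul_right _).mul_right _
  have key := hasSum_integral_of_summable_integral_norm hIntg hsumm
  have hval : ∀ n, ∫ t, F n t = if n ∈ Finset.Icc 1 ⌊x⌋₊ then
      (2 * Real.pi) * (a n * ((1 - n / x : ℝ) : ℂ)) else 0 := by
    intro n
    by_cases hn : n = 0
    · subst hn; simp [hF]
    have hn0 : (0:ℝ) < n := by exact_mod_cast Nat.pos_of_ne_zero hn
    have hy : 0 < (n:ℝ)/x := by positivity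
    have e1 : ∀ t, F n t = a n * ((((n/x:ℝ)):ℂ)^(-((σ:ℂ) + t * Complex.I)) * pKer (σ + t * Complex.I)) := by
      intro t
      simp only [hF, LSeries.term_of_ne_zero hn]
      have : (((n/x:ℝ)):ℂ)^(-((σ:ℂ) + t * Complex.I))
          = (x:ℂ)^((σ:ℂ) + t * Complex.I) / (n:ℂ)^((σ:ℂ) + t * Complex.I) := by
        rw [Complex.cpow_neg, div_eq_mul_inv, Complex.ofReal_mul,
          Complex.mul_cpow_ofReal_nonneg hn0.le (by positivity), mul_inv, mul_comm]
        rw [Complex.ofReal_inv, Complex.inv_cpow _ _ (by rw [Complex.arg_ofReal_of_nonneg hx.le]; exact Real.pi_pos.ne), inv_inv]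
        simp [div_eq_mul_inv]
      rw [this]; ring
    simp_rw [e1]
    rw [integral_const_mul, pKer_inv hσ hy]
    split_ifs with h
    · rw [Finset.mem_Icc, Nat.le_floor_iff hx.le] at h
      rw [max_eq_left]
      · ring
      · rw [sub_nonneg, div_le_one hx]; exact h.2
    · rw [Finset.mem_Icc, Nat.le_floor_iff hx.le] at h
      have : x < n := by
        by_contra h'; exact h ⟨Nat.pos_of_ne_zero hn, not_lt.1 h'⟩
      rw [max_eq_right]
      · simp
      · rw [sub_nonpos, one_le_div hx]; exact this.le
  simp_rw [hval] at key
  have key2 := hasSum_sum_of_ne_finset_zero (L := .unconditional ℕ) (s := Finset.Icc 1 ⌊x⌋₊)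
    (f := fun n => if n ∈ Finset.Icc 1 ⌊x⌋₊ then
      (2 * Real.pi) * (a n * ((1 - n / x : ℝ) : ℂ)) else 0) (fun n hn => by simp only [hn, if_false])
  have key3 := key2.unique key
  rw [Finset.sum_congr rfl (g := fun n => (2 * Real.pi) * (a n * ((1 - n / x : ℝ) : ℂ)))
    (fun n hn => by simp only [hn, if_true]), ← Finset.mul_sum] at key3
  have hle : ‖∫ t, ∑' n, F n t‖ ≤ ∫ t : ℝ, (C * x^σ) * (4 * (1 + ‖t‖)^(-(3/2:ℝ))) := by
    refine norm_integral_le_of_norm_le ?_ ?_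
    · exact ((integrable_one_add_norm (E := ℝ) (μ := volume) (r := 3/2) (by simp; norm_num)).const_mul 4).const_mul _
    · refine Filter.Eventually.of_forall fun t => ?_
      simp only [hF]
      rw [tsum_mul_right, norm_mul, norm_mul, hxn]
      have h1 := hb t
      have h2 := pKer_bound hσ t
      unfold LSeries at h1
      have hp : 0 < 1 + ‖t‖ := by positivity
      calc _ ≤ (C * (1 + |t|)^((1:ℝ)/2)) * (x^σ * (4 * (1 + ‖t‖)^(-(2:ℝ)))) := by gcongr
        _ = (C * x^σ) * (4 * ((1 + ‖t‖)^((1:ℝ)/2) * (1 + ‖t‖)^(-(2:ℝ)))) := by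
          rw [Real.norm_eq_abs]; ring
        _ = _ := by rw [← Real.rpow_add hp]; norm_num
  rw [integral_const_mul] at hle
  rw [← key3, norm_mul] at hle
  have hpi : (1:ℝ) ≤ ‖(2 * Real.pi : ℂ)‖ := by
    rw [norm_mul, Complex.norm_real, Real.norm_eq_abs, abs_of_pos Real.pi_pos]
    simp; linarith [Real.pi_gt_three]
  calc _ ≤ ‖(2 * Real.pi : ℂ)‖ * ‖∑ n ∈ Finset.Icc 1 ⌊x⌋₊, a n * ((1 - n / x : ℝ) : ℂ)‖ :=
        le_mul_of_one_le_left (norm_nonneg _) hpi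
    _ ≤ _ := hle
    _ = _ := by unfold K0; ring


noncomputable def aC : ℕ → ℂ := (fun n => ((ArithmeticFunction.vonMangoldt n : ℝ) : ℂ)) - 1

lemma aC_summable {s : ℂ} (hs : 1 < s.re) : LSeriesSummable aC s :=
  (ArithmeticFunction.LSeriesSummable_vonMangoldt hs).sub (LSeriesSummable_one_iff.2 hs)

lemma aC_LSeries {s : ℂ} (hs : 1 < s.re) : LSeries aC s = Fx s := by
  have h1 := ArithmeticFunction.LSeriesSummable_vonMangoldt hs
  have h2 := LSeriesSummable_one_iff.2 hs
  unfold aC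
  rw [LSeries_sub h1 h2, ArithmeticFunction.LSeries_vonMangoldt_eq_deriv_riemannZeta_div hs,
    LSeries_one_eq_riemannZeta hs, Fx_eq (by rintro rfl; simp at hs)
      (riemannZeta_ne_zero_of_one_le_re hs.le), neg_div]

lemma aC_abscissa : LSeries.abscissaOfAbsConv aC ≤ 1 := by
  refine LSeries.abscissaOfAbsConv_le_of_forall_lt_LSeriesSummable fun y hy => ?_
  refine aC_summable ?_
  simpa using hy

lemma aC_abscissa_lt {s : ℂ} (hs : 1 < s.re) : LSeries.abscissaOfAbsConv aC < s.re :=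
  aC_abscissa.trans_lt (by exact_mod_cast hs)

lemma logMul_iter (N n : ℕ) :
    (LSeries.logMul^[N] aC) n = (((ArithmeticFunction.vonMangoldt n - 1) * (Real.log n)^N : ℝ) : ℂ) := by
  induction N with
  | zero => simp [aC]
  | succ N ih =>
    rw [Function.iterate_succ_apply']
    unfold LSeries.logMul
    rw [ih]
    push_cast
    ring

lemma iter_bound (N : ℕ) : ∃ C ≥ 0, ∀ s : ℂ, 1 < s.re → s.re ≤ 3/2 →
    ‖LSeries (LSeries.logMul^[N] aC) s‖ ≤ C*(1+|s.im|)^((1:ℝ)/2) := by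
  obtain ⟨C, hC, h⟩ := Fx_iter_bound N
  refine ⟨C, hC, fun s h1 h2 => ?_⟩
  have h3 := LSeries_iteratedDeriv N (aC_abscissa_lt h1)
  have h4 : iteratedDeriv N (LSeries aC) s = iteratedDeriv N Fx s := by
    refine Filter.EventuallyEq.iteratedDeriv_eq N ?_
    have : IsOpen {w : ℂ | 1 < w.re} := isOpen_lt continuous_const Complex.continuous_re
    filter_upwards [this.mem_nhds h1] with w hw
    exact aC_LSeries hw
  rw [h4] at h3
  have := h s h1 h2
  rw [h3, norm_mul] at this
  simpa using this

noncomputable def aR (n : ℕ) : ℝ := ArithmeticFunction.vonMangoldt n - 1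

lemma smooth_bound (N : ℕ) : ∃ C ≥ 0, ∀ x : ℝ, 8 ≤ x →
    |∑ n ∈ Finset.Icc 1 ⌊x⌋₊, aR n * (Real.log n)^N * (1 - n / x)| ≤ C * x := by
  obtain ⟨C, hC, h⟩ := iter_bound N
  have hK : 0 ≤ K0 := MeasureTheory.integral_nonneg fun t => by positivity
  refine ⟨C * K0 * Real.exp 1, by positivity, fun x hx => ?_⟩
  have hx0 : 0 < x := by linarith
  have hlog : 2 ≤ Real.log x := by
    rw [Real.le_log_iff_exp_le hx0]
    have : Real.exp 2 = Real.exp 1 ^ 2 := by rw [← Real.exp_nat_mul]; norm_num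
    rw [this]
    have := Real.exp_one_lt_d9
    have := Real.exp_pos 1
    nlinarith
  set σ : ℝ := 1 + 1 / Real.log x with hσ
  have hσ1 : 1 < σ := by
    have : 0 < 1 / Real.log x := by positivity
    linarith
  have hσ2 : σ ≤ 3/2 := by
    have : 1 / Real.log x ≤ 1/2 := by gcongr
    linarith
  have hxs : x^σ = Real.exp 1 * x := by
    rw [hσ, Real.rpow_add hx0, Real.rpow_one, Real.rpow_def_of_pos hx0, mul_one_div_cancel (by linarith)]
    ring
  have hsum : LSeriesSummable (LSeries.logMul^[N] aC) (σ:ℂ) := by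
    refine LSeriesSummable_of_abscissaOfAbsConv_lt_re ?_
    rw [LSeries.absicssaOfAbsConv_logPowMul]
    exact aC_abscissa_lt (by simpa using hσ1)
  have := perron_bound _ hσ1.le hC hsum (fun t => by
    have := h (σ + t * Complex.I) (by simpa using hσ1) (by simpa using hσ2)
    simpa using this) hx0
  simp only [logMul_iter] at this
  rw [hxs] at this
  have e : ∑ n ∈ Finset.Icc 1 ⌊x⌋₊, (((ArithmeticFunction.vonMangoldt n - 1) * (Real.log n)^N : ℝ) : ℂ) *
      ((1 - n / x : ℝ) : ℂ) = ((∑ n ∈ Finset.Icc 1 ⌊x⌋₊, aR n * (Real.log n)^N * (1 - n / x) : ℝ) : ℂ) := by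
    unfold aR
    push_cast
    rfl
  rw [e, Complex.norm_real, Real.norm_eq_abs] at this
  linarith


lemma abel_bound (b w : ℕ → ℝ) (m : ℕ) (B : ℝ) (j : ℕ) (hmj : m ≤ j)
    (hB : ∀ i, m ≤ i → i ≤ j → |∑ l ∈ Finset.Ioc m i, b l| ≤ B) :
    |∑ i ∈ Finset.Ioc m j, b i * w i| ≤ B * (|w (j+1)| + ∑ i ∈ Finset.Ioc m j, |w i - w (i+1)|) := by
  have key : ∀ j, m ≤ j → (∀ i, m ≤ i → i ≤ j → |∑ l ∈ Finset.Ioc m i, b l| ≤ B) →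
      |∑ i ∈ Finset.Ioc m j, b i * w i - (∑ l ∈ Finset.Ioc m j, b l) * w (j+1)|
        ≤ B * ∑ i ∈ Finset.Ioc m j, |w i - w (i+1)| := by
    intro j hj
    induction j, hj using Nat.le_induction with
    | base => intro; simp
    | succ j hj ih =>
      intro h
      have h1 := ih fun i hi hij => h i hi (by omega)
      have h2 := h (j+1) (by omega) le_rfl
      have hins : Finset.Ioc m (j+1) = insert (j+1) (Finset.Ioc m j) := by
        ext i; simp only [Finset.mem_Ioc, Finset.mem_insert]; omega
      rw [hins] at h2 ⊢
      rw [Finset.sum_insert (by simp)] at h2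
      rw [Finset.sum_insert (by simp), Finset.sum_insert (by simp), Finset.sum_insert (by simp)]
      set D := ∑ l ∈ Finset.Ioc m j, b l
      have e : b (j+1) * w (j+1) + ∑ i ∈ Finset.Ioc m j, b i * w i - (b (j+1) + D) * w (j+1+1)
          = (∑ i ∈ Finset.Ioc m j, b i * w i - D * w (j+1)) + (b (j+1) + D) * (w (j+1) - w (j+1+1)) := by ring
      rw [e, mul_add]
      refine (abs_add_le _ _).trans ?_
      rw [abs_mul, add_comm (B * _)]
      gcongr
  have h1 := key j hmj hB
  have h2 := hB j hmj le_rfl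
  have h3 := abs_mul (∑ l ∈ Finset.Ioc m j, b l) (w (j+1))
  have h4 := mul_le_mul_of_nonneg_right h2 (abs_nonneg (w (j+1)))
  have h5 := abs_sub_abs_le_abs_sub (∑ i ∈ Finset.Ioc m j, b i * w i) ((∑ l ∈ Finset.Ioc m j, b l) * w (j+1))
  rw [mul_add]
  linarith

lemma unsmooth (c : ℕ → ℝ) (C W : ℝ) (x y : ℕ) (hC : 0 ≤ C) (hx : 16 ≤ x) (hy : 1 ≤ y) (hxy : 2 * y ≤ x)
    (hc : ∀ n, n ≤ 2 * x → - W ≤ c n) (hW : 0 ≤ W)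
    (hT : ∀ m : ℕ, 8 ≤ m → |∑ n ∈ Finset.Icc 1 m, c n * ((m:ℝ) - n)| ≤ C * (m:ℝ)^2) :
    |∑ n ∈ Finset.Icc 1 x, c n| ≤ 5 * C * (x:ℝ)^2 / y + y * W := by
  have hy0 : (0:ℝ) < y := by exact_mod_cast hy
  have split : ∀ (f : ℕ → ℝ) (p q : ℕ), p ≤ q → ∑ n ∈ Finset.Icc 1 q, f n =
      ∑ n ∈ Finset.Icc 1 p, f n + ∑ n ∈ Finset.Ioc p q, f n := by
    intro f p q hpq
    have e1 : ∀ r : ℕ, Finset.Icc 1 r = Finset.Ioc 0 r := by intro r; ext; simp; omega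
    rw [e1, e1, Finset.sum_Ioc_consecutive _ (Nat.zero_le _) hpq]
  set S := ∑ n ∈ Finset.Icc 1 x, c n with hS
  have bx := abs_le.1 (hT x (by omega))
  have bp := abs_le.1 (hT (x+y) (by omega))
  have bm := abs_le.1 (hT (x-y) (by omega))
  have hyx : (2:ℝ) * y ≤ x := by exact_mod_cast hxy
  have hsub : ((x - y : ℕ) : ℝ) = x - y := by rw [Nat.cast_sub (by omega)]
  have hp2 : C * ((x + y : ℕ):ℝ)^2 ≤ 4 * C * (x:ℝ)^2 := by
    push_cast
    have : ((x:ℝ)+y)^2 ≤ 4 * (x:ℝ)^2 := by nlinarith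
    nlinarith
  have hm2 : C * ((x - y : ℕ):ℝ)^2 ≤ C * (x:ℝ)^2 := by
    rw [hsub]
    have : ((x:ℝ)-y)^2 ≤ (x:ℝ)^2 := by nlinarith
    nlinarith
  have hC2 : 0 ≤ C * (x:ℝ)^2 := by positivity
  rw [split _ x (x+y) (by omega)] at bp
  rw [split _ (x-y) x (by omega)] at bx
  have ep : ∑ n ∈ Finset.Icc 1 x, c n * (((x+y:ℕ):ℝ) - n) = ∑ n ∈ Finset.Icc 1 x, c n * ((x:ℝ) - n) + y * S := by
    rw [hS, Finset.mul_sum, ← Finset.sum_add_distrib]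
    refine Finset.sum_congr rfl fun n _ => ?_
    push_cast; ring
  have up : -(y * (y * W)) ≤ ∑ n ∈ Finset.Ioc x (x+y), c n * (((x+y:ℕ):ℝ) - n) := by
    have : ∑ n ∈ Finset.Ioc x (x+y), (-(y * W)) ≤ ∑ n ∈ Finset.Ioc x (x+y), c n * (((x+y:ℕ):ℝ) - n) := by
      refine Finset.sum_le_sum fun n hn => ?_
      rw [Finset.mem_Ioc] at hn
      have h1 := hc n (by omega)
      have h2 : (x:ℝ) ≤ n := by exact_mod_cast hn.1.le
      have h3 : (n:ℝ) ≤ ((x+y:ℕ):ℝ) := by exact_mod_cast hn.2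
      have h4 : ((x+y:ℕ):ℝ) = x + y := by push_cast; ring
      nlinarith
    rw [Finset.sum_const, Nat.card_Ioc, nsmul_eq_mul] at this
    rw [show x + y - x = y by omega] at this
    linarith
  have lo : -(y * (y * W)) ≤ ∑ n ∈ Finset.Ioc (x-y) x, c n * ((n:ℝ) - (x-y)) := by
    have : ∑ n ∈ Finset.Ioc (x-y) x, (-(y * W)) ≤ ∑ n ∈ Finset.Ioc (x-y) x, c n * ((n:ℝ) - (x-y)) := by
      refine Finset.sum_le_sum fun n hn => ?_
      rw [Finset.mem_Ioc] at hn
      have h1 := hc n (by omega)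
      have h2 : (x:ℝ) - y ≤ n := by rw [← hsub]; exact_mod_cast hn.1.le
      have h3 : (n:ℝ) ≤ x := by exact_mod_cast hn.2
      nlinarith
    rw [Finset.sum_const, Nat.card_Ioc, nsmul_eq_mul] at this
    rw [show x - (x - y) = y by omega] at this
    linarith
  have em : ∑ n ∈ Finset.Icc 1 (x-y), c n * ((x:ℝ) - n) + ∑ n ∈ Finset.Ioc (x-y) x, c n * ((x:ℝ) - n)
      = ∑ n ∈ Finset.Icc 1 (x-y), c n * (((x-y:ℕ):ℝ) - n) + y * S
        - ∑ n ∈ Finset.Ioc (x-y) x, c n * ((n:ℝ) - (x-y)) := by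
    rw [hS, split c (x-y) x (by omega), mul_add, Finset.mul_sum, Finset.mul_sum]
    have e1 : ∑ n ∈ Finset.Icc 1 (x-y), c n * ((x:ℝ) - n) = ∑ n ∈ Finset.Icc 1 (x-y), c n * (((x-y:ℕ):ℝ) - n)
        + ∑ n ∈ Finset.Icc 1 (x-y), y * c n := by
      rw [← Finset.sum_add_distrib]
      refine Finset.sum_congr rfl fun n _ => ?_
      rw [hsub]; ring
    have e2 : ∑ n ∈ Finset.Ioc (x-y) x, c n * ((x:ℝ) - n) = ∑ n ∈ Finset.Ioc (x-y) x, y * c n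
        - ∑ n ∈ Finset.Ioc (x-y) x, c n * ((n:ℝ) - (x-y)) := by
      rw [← Finset.sum_sub_distrib]
      refine Finset.sum_congr rfl fun n _ => ?_
      ring
    linarith
  have bx' := abs_le.1 (hT x (by omega))
  rw [ep] at bp
  rw [em] at bx
  have hu : y * S ≤ 5 * C * (x:ℝ)^2 + y * (y * W) := by linarith
  have hl : -(5 * C * (x:ℝ)^2 + y * (y * W)) ≤ y * S := by linarith
  have hab : |y * S| ≤ 5 * C * (x:ℝ)^2 + y * (y * W) := abs_le.2 ⟨hl, hu⟩
  rw [abs_mul, abs_of_pos hy0] at hab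
  rw [← sub_nonneg]
  have : 5 * C * (x:ℝ)^2 / y + y * W - |S| = (5 * C * (x:ℝ)^2 + y * (y * W) - y * |S|) / y := by field_simp
  rw [this]
  exact div_nonneg (by linarith) hy0.le


open Filter in
lemma log_pow_le_ev (j : ℕ) : ∃ n0 : ℕ, 16 ≤ n0 ∧ ∀ x : ℕ, n0 ≤ x → (Real.log x)^j ≤ x := by
  have h := (Real.isLittleO_pow_log_id_atTop (n := j)).bound (c := 1) (by norm_num)
  have h2 := (tendsto_natCast_atTop_atTop (R := ℝ)).eventually h
  obtain ⟨n0, hn0⟩ := eventually_atTop.1 h2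
  refine ⟨max n0 16, le_max_right _ _, fun x hx => ?_⟩
  have := hn0 x (le_trans (le_max_left _ _) hx)
  simp only [id, one_mul, Real.norm_eq_abs, Nat.abs_cast] at this
  exact (le_abs_self _).trans this

lemma two_le_log {x : ℕ} (hx : 16 ≤ x) : 2 ≤ Real.log x := by
  have hx0 : (0:ℝ) < x := by exact_mod_cast (by omega : 0 < x)
  rw [Real.le_log_iff_exp_le hx0]
  have : Real.exp 2 = Real.exp 1 ^ 2 := by rw [← Real.exp_nat_mul]; norm_num
  rw [this]
  have := Real.exp_one_lt_d9
  have := Real.exp_pos 1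
  have : (16:ℝ) ≤ x := by exact_mod_cast hx
  nlinarith

lemma S_bound (M : ℕ) (hM : 2 ≤ M) : ∃ C ≥ 0, ∃ n0 : ℕ, 16 ≤ n0 ∧ ∀ x : ℕ, n0 ≤ x →
    |∑ n ∈ Finset.Icc 1 x, aR n * (Real.log n)^(2*M)| ≤ C * (x * (Real.log x)^M) := by
  obtain ⟨C, hC, h⟩ := smooth_bound (2*M)
  obtain ⟨n0, hn16, hn0⟩ := log_pow_le_ev M
  refine ⟨5 * C + 2 * 4^M, by positivity, n0, hn16, fun x hx => ?_⟩
  have hx16 : 16 ≤ x := by omega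
  have hxR : (16:ℝ) ≤ x := by exact_mod_cast hx16
  have hl2 := two_le_log hx16
  have hlM := hn0 x hx
  set l := Real.log x with hl
  have hl4 : 4 ≤ l^M := by
    calc (4:ℝ) = 2^2 := by norm_num
      _ ≤ l^2 := by gcongr
      _ ≤ l^M := pow_le_pow_right₀ (by linarith) hM
  set y := ⌈(x:ℝ) / l^M⌉₊ with hy
  have hy1 : (x:ℝ)/l^M ≤ y := Nat.le_ceil _
  have hdpos : 0 < (x:ℝ)/l^M := by positivity
  have hy2 : (y:ℝ) ≤ x/l^M + 1 := (Nat.ceil_lt_add_one hdpos.le).le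
  have hy0 : 1 ≤ y := Nat.ceil_pos.2 hdpos
  have hyR : (0:ℝ) < y := by exact_mod_cast hy0
  have hyx : 2 * y ≤ x := by
    have : (x:ℝ)/l^M ≤ x/4 := by gcongr
    have : (2:ℝ) * y ≤ x := by linarith
    exact_mod_cast this
  have hu := unsmooth (fun n => aR n * (Real.log n)^(2*M)) C ((2*l)^(2*M)) x y hC hx16 hy0 hyx
    (fun n hn => ?_) (by positivity) (fun m hm => ?_)
  · refine hu.trans ?_
    have a1 : 5 * C * (x:ℝ)^2 / y ≤ 5 * C * (x * l^M) := by
      rw [div_le_iff₀ hyR]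
      rw [div_le_iff₀ (by positivity)] at hy1
      have : (x:ℝ)^2 ≤ x * l^M * y := by nlinarith
      nlinarith
    have a2 : y * (2*l)^(2*M) ≤ 2 * 4^M * (x * l^M) := by
      have e : (2*l)^(2*M) = 4^M * (l^M * l^M) := by
        rw [mul_pow, pow_mul, pow_mul, ← mul_pow l l, ← sq]; norm_num
      rw [e]
      calc (y:ℝ) * (4^M * (l^M * l^M)) ≤ (x/l^M + 1) * (4^M * (l^M * l^M)) := by gcongr
        _ = 4^M * (x * l^M + l^M * l^M) := by field_simp
        _ ≤ 4^M * (x * l^M + x * l^M) := by gcongr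
        _ = _ := by ring
    linarith
  · have hnn : 0 ≤ Real.log n := Real.log_natCast_nonneg n
    have h1 : Real.log n ≤ 2 * l := by
      rcases Nat.eq_zero_or_pos n with h0 | h0
      · subst h0; simp; linarith
      · have : Real.log n ≤ Real.log (x*x) := by
          apply Real.log_le_log (by exact_mod_cast h0)
          have : (n:ℝ) ≤ 2 * x := by exact_mod_cast hn
          nlinarith
        rw [Real.log_mul (by positivity) (by positivity)] at this
        linarith
    have h2 : (Real.log n)^(2*M) ≤ (2*l)^(2*M) := by gcongr
    have h3 : -1 ≤ aR n := by
      unfold aR; linarith [ArithmeticFunction.vonMangoldt_nonneg (n := n)]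
    have h4 : 0 ≤ (Real.log n)^(2*M) := by positivity
    nlinarith
  · have := h m (by exact_mod_cast hm)
    rw [Nat.floor_natCast] at this
    have hm0 : (0:ℝ) < m := by exact_mod_cast (by omega : 0 < m)
    have e : ∑ n ∈ Finset.Icc 1 m, aR n * (Real.log n)^(2*M) * ((m:ℝ) - n)
        = m * ∑ n ∈ Finset.Icc 1 m, aR n * (Real.log n)^(2*M) * (1 - n/m) := by
      rw [Finset.mul_sum]
      refine Finset.sum_congr rfl fun n _ => ?_
      field_simp
    rw [e, abs_mul, Nat.abs_cast]
    nlinarith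

lemma sqrt_mul_log_le {x j : ℕ} (h : (Real.log x)^(2*j) ≤ x) : √(x:ℝ) * (Real.log x)^j ≤ x := by
  have h0 : 0 ≤ Real.log x := Real.log_natCast_nonneg x
  have : (Real.log x)^j ≤ √(x:ℝ) := by
    apply Real.le_sqrt_of_sq_le
    rw [← pow_mul, mul_comm]; exact h
  calc √(x:ℝ) * (Real.log x)^j ≤ √(x:ℝ) * √(x:ℝ) := by gcongr
    _ = x := Real.mul_self_sqrt (Nat.cast_nonneg x)

lemma psi_bound (M : ℕ) (hM : 2 ≤ M) : ∃ C ≥ 0, ∃ n0 : ℕ, 16 ≤ n0 ∧ ∀ x : ℕ, n0 ≤ x →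
    |∑ n ∈ Finset.Icc 1 x, aR n| ≤ C * (x / (Real.log x)^M) := by
  obtain ⟨C, hC, n0, hn16, hS⟩ := S_bound M hM
  obtain ⟨n1, hn1, hlog⟩ := log_pow_le_ev (2*(M+1))
  refine ⟨2 + 2 * C * 4^M, by positivity, max (n0*n0) n1, by
    exact le_trans hn1 (le_max_right _ _), fun x hx => ?_⟩
  have hx1 : n1 ≤ x := le_trans (le_max_right _ _) hx
  have hx2 : n0 * n0 ≤ x := le_trans (le_max_left _ _) hx
  have hl := hlog x hx1
  have hl2 := two_le_log (x := x) (by omega)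
  have hx0 : (0:ℝ) < x := by exact_mod_cast (by omega : 0 < x)
  set l := Real.log x with hldef
  set m := Nat.sqrt x with hm
  have hmn : n0 ≤ m := Nat.le_sqrt.2 hx2
  have hmx : m ≤ x := Nat.sqrt_le_self x
  have hm1 : x < (m+1)*(m+1) := Nat.sqrt_lt'.1 (Nat.lt_succ_self _) |>.trans_eq (sq _)
  have hm2 : m * m ≤ x := Nat.sqrt_le x
  have e1 : ∀ r : ℕ, Finset.Icc 1 r = Finset.Ioc 0 r := by intro r; ext; simp; omega
  have hsplit : ∑ n ∈ Finset.Icc 1 x, aR n = ∑ n ∈ Finset.Icc 1 m, aR n + ∑ n ∈ Finset.Ioc m x, aR n := by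
    rw [e1, e1, Finset.sum_Ioc_consecutive _ (Nat.zero_le _) hmx]
  have part1 : |∑ n ∈ Finset.Icc 1 m, aR n| ≤ 2 * (x / l^M) := by
    have b1 : ∀ n ∈ Finset.Icc 1 m, |aR n| ≤ 2 * l := by
      intro n hn
      rw [Finset.mem_Icc] at hn
      have h1 := ArithmeticFunction.vonMangoldt_nonneg (n := n)
      have h2 := ArithmeticFunction.vonMangoldt_le_log (n := n)
      have h3 : Real.log n ≤ l := Real.log_le_log (by exact_mod_cast hn.1) (by exact_mod_cast hn.2.trans hmx)
      unfold aR
      rw [abs_le]; constructor <;> linarith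
    calc |∑ n ∈ Finset.Icc 1 m, aR n| ≤ ∑ n ∈ Finset.Icc 1 m, |aR n| := Finset.abs_sum_le_sum_abs _ _
      _ ≤ ∑ n ∈ Finset.Icc 1 m, 2 * l := Finset.sum_le_sum b1
      _ = m * (2 * l) := by simp
      _ ≤ √(x:ℝ) * (2 * l) := by
        gcongr
        apply Real.le_sqrt_of_sq_le
        rw [sq]; exact_mod_cast hm2
      _ ≤ 2 * (x / l^M) := by
        have := sqrt_mul_log_le hl
        rw [pow_succ] at this
        rw [← sub_nonneg]
        have e : 2 * ((x:ℝ) / l^M) - √(x:ℝ) * (2 * l) = 2 * (x - √(x:ℝ) * (l^M * l)) / l^M := by field_simp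
        rw [e]
        exact div_nonneg (by linarith) (by positivity)
  have part2 : |∑ n ∈ Finset.Ioc m x, aR n| ≤ 2 * C * 4^M * (x / l^M) := by
    have hab := abel_bound (fun n => aR n * (Real.log n)^(2*M)) (fun n => ((Real.log n)^(2*M))⁻¹) m
      (2 * C * (x * l^M)) x hmx (fun i hi hix => ?_)
    · have hpos : ∀ n : ℕ, m < n → 0 < Real.log n := fun n hn => by
        have := two_le_log (x := n) (by omega)
        linarith
      have ea : ∑ i ∈ Finset.Ioc m x, aR i * (Real.log i)^(2*M) * ((Real.log i)^(2*M))⁻¹ = ∑ n ∈ Finset.Ioc m x, aR n := by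
        refine Finset.sum_congr rfl fun n hn => ?_
        rw [Finset.mem_Ioc] at hn
        have := hpos n hn.1
        field_simp
      rw [ea] at hab
      refine hab.trans ?_
      have et : ∑ i ∈ Finset.Ioc m x, |((Real.log i)^(2*M))⁻¹ - ((Real.log (i+1:ℕ))^(2*M))⁻¹|
          = ((Real.log (m+1:ℕ))^(2*M))⁻¹ - ((Real.log (x+1:ℕ))^(2*M))⁻¹ := by
        have : ∀ j, m ≤ j → ∑ i ∈ Finset.Ioc m j, |((Real.log i)^(2*M))⁻¹ - ((Real.log (i+1:ℕ))^(2*M))⁻¹|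
          = ((Real.log (m+1:ℕ))^(2*M))⁻¹ - ((Real.log (j+1:ℕ))^(2*M))⁻¹ := by
          intro j hj
          induction j, hj using Nat.le_induction with
          | base => simp
          | succ j hj ih =>
            have hins : Finset.Ioc m (j+1) = insert (j+1) (Finset.Ioc m j) := by
              ext i; simp only [Finset.mem_Ioc, Finset.mem_insert]; omega
            rw [hins, Finset.sum_insert (by simp), ih, abs_of_nonneg]
            · ring
            · rw [sub_nonneg]
              have h1 := hpos (j+1) (by omega)
              apply inv_anti₀ (by positivity)
              have : Real.log (j+1:ℕ) ≤ Real.log (j+1+1:ℕ) :=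
                Real.log_le_log (by positivity) (by push_cast; linarith)
              exact pow_le_pow_left₀ h1.le this _
        exact this x hmx
      rw [et, abs_of_nonneg (inv_nonneg.2 (by have := hpos (x+1) (by omega); positivity)), add_sub_cancel]
      have hlm : l ≤ 2 * Real.log (m+1:ℕ) := by
        have : l ≤ Real.log (((m+1:ℕ):ℝ) * ((m+1:ℕ):ℝ)) :=
          Real.log_le_log hx0 (by exact_mod_cast hm1.le)
        rw [Real.log_mul (by positivity) (by positivity)] at this
        linarith
      have hlm0 := hpos (m+1) (by omega)
      have h5 : ((Real.log (m+1:ℕ))^(2*M))⁻¹ ≤ ((l/2)^(2*M))⁻¹ := by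
        apply inv_anti₀ (by positivity)
        gcongr
        linarith
      calc 2 * C * (x * l^M) * ((Real.log (m+1:ℕ))^(2*M))⁻¹ ≤ 2 * C * (x * l^M) * ((l/2)^(2*M))⁻¹ := by gcongr
        _ = _ := by
          rw [div_pow, pow_mul 2, two_mul M, pow_add]; field_simp; norm_num
    · have hs : ∑ l ∈ Finset.Ioc m i, aR l * (Real.log l)^(2*M) =
          ∑ l ∈ Finset.Icc 1 i, aR l * (Real.log l)^(2*M) - ∑ l ∈ Finset.Icc 1 m, aR l * (Real.log l)^(2*M) := by
        rw [e1, e1, ← Finset.sum_Ioc_consecutive _ (Nat.zero_le _) hi]; ring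
      have hmono : ∀ i : ℕ, m ≤ i → i ≤ x → |∑ n ∈ Finset.Icc 1 i, aR n * (Real.log n)^(2*M)| ≤ C * (x * l^M) := by
        intro i hi hix
        refine (hS i (by omega)).trans ?_
        have : Real.log i ≤ l := Real.log_le_log (by exact_mod_cast (by omega : 0 < i)) (by exact_mod_cast hix)
        have : 0 ≤ Real.log i := Real.log_natCast_nonneg i
        gcongr
      rw [hs]
      refine (abs_sub _ _).trans ?_
      have := hmono i hi hix
      have := hmono m le_rfl hmx
      linarith
  rw [hsplit]
  refine (abs_add_le _ _).trans ?_
  linarith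


lemma psi_eq_aR (m : ℕ) : Chebyshev.psi m - m = ∑ n ∈ Finset.Icc 1 m, aR n := by
  unfold aR
  rw [Finset.sum_sub_distrib, Chebyshev.psi, Nat.floor_natCast]
  have : Finset.Icc 1 m = Finset.Ioc 0 m := by ext; simp; omega
  rw [this]; simp

lemma theta_unif (M : ℕ) (hM : 2 ≤ M) : ∃ C ≥ 0, ∃ n0 : ℕ, 16 ≤ n0 ∧ ∀ n : ℕ, n0 ≤ n → ∀ m : ℕ, m ≤ n →
    |Chebyshev.theta m - m| ≤ C * (n / (Real.log n)^M) := by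
  obtain ⟨C, hC, n0, hn16, hS⟩ := psi_bound M hM
  obtain ⟨n1, hn1, hlog⟩ := log_pow_le_ev (2*(M+1))
  refine ⟨2 + C * 2^M, by positivity, max (n0*n0) n1, le_trans hn1 (le_max_right _ _), fun n hn m hmn => ?_⟩
  have hx1 : n1 ≤ n := le_trans (le_max_right _ _) hn
  have hx2 : n0 * n0 ≤ n := le_trans (le_max_left _ _) hn
  have hl := hlog n hx1
  have hl2 := two_le_log (x := n) (by omega)
  have hx0 : (0:ℝ) < n := by exact_mod_cast (by omega : 0 < n)
  set l := Real.log n with hldef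
  have hsq := sqrt_mul_log_le hl
  rw [← hldef] at hsq
  have hm0 : (0:ℝ) ≤ m := Nat.cast_nonneg m
  have hsq2 : √(n:ℝ) * l ≤ n / l^M := by
    rw [le_div_iff₀ (by positivity)]
    calc √(n:ℝ) * l * l^M = √(n:ℝ) * l^(M+1) := by rw [pow_succ]; ring
      _ ≤ n := hsq
  have hCp : 0 ≤ C * 2^M * (n / l^M) := by positivity
  by_cases hmn2 : m * m < n
  · have h1 := Chebyshev.theta_le_log4_mul_x hm0
    have h2 := Chebyshev.theta_nonneg (m:ℝ)
    have h3 : Real.log 4 ≤ 2 := by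
      rw [show (4:ℝ) = 2^2 by norm_num, Real.log_pow]
      have := Real.log_two_lt_d9
      push_cast; linarith
    have h4 : (m:ℝ) ≤ √(n:ℝ) := by
      apply Real.le_sqrt_of_sq_le
      rw [sq]; exact_mod_cast hmn2.le
    have h5 : |Chebyshev.theta m - m| ≤ 2 * m := by
      rw [abs_le]; constructor <;> nlinarith
    have h6 : (m:ℝ) ≤ √(n:ℝ) * l := by nlinarith [Real.sqrt_nonneg (n:ℝ)]
    nlinarith
  · push Not at hmn2
    have hmn0 : n0 ≤ m := by nlinarith
    have h1 := hS m hmn0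
    rw [← psi_eq_aR] at h1
    have hm1 : (1:ℝ) ≤ m := by exact_mod_cast (by omega : 1 ≤ m)
    have h2 := Chebyshev.abs_psi_sub_theta_le_sqrt_mul_log hm1
    have hlm : l ≤ 2 * Real.log m := by
      have : l ≤ Real.log ((m:ℝ) * m) := Real.log_le_log hx0 (by exact_mod_cast hmn2)
      rw [Real.log_mul (by positivity) (by positivity)] at this
      linarith
    have hml : Real.log m ≤ l := Real.log_le_log (by linarith) (by exact_mod_cast hmn)
    have h3 : C * (m / (Real.log m)^M) ≤ C * 2^M * (n / l^M) := by
      have : (m:ℝ) / (Real.log m)^M ≤ n / (l/2)^M := by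
        gcongr
        linarith
      calc C * (m / (Real.log m)^M) ≤ C * (n / (l/2)^M) := by gcongr
        _ = _ := by rw [div_pow]; field_simp
    have h4 : 2 * √(m:ℝ) * Real.log m ≤ 2 * (√(n:ℝ) * l) := by
      have : √(m:ℝ) ≤ √(n:ℝ) := Real.sqrt_le_sqrt (by exact_mod_cast hmn)
      have h0 : 0 ≤ Real.log m := Real.log_natCast_nonneg m
      calc 2 * √(m:ℝ) * Real.log m ≤ 2 * √(n:ℝ) * l := by gcongr
        _ = _ := by ring
    have h5 := abs_sub_le (Chebyshev.theta m) (Chebyshev.psi m) m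
    rw [abs_sub_comm (Chebyshev.theta m) (Chebyshev.psi m)] at h5
    nlinarith


lemma sum_nthRoots (n : ℕ) (hn : 0 < n) :
    ∑ z ∈ Polynomial.nthRootsFinset n (1:ℂ), z = if n = 1 then 1 else 0 := by
  have hprim := Complex.isPrimitiveRoot_exp n hn.ne'
  set ζ := Complex.exp (2 * Real.pi * Complex.I / n)
  have himg : ∑ z ∈ Polynomial.nthRootsFinset n (1:ℂ), z = ∑ i ∈ Finset.range n, ζ ^ i := by
    symm
    refine Finset.sum_bij (fun i _ => ζ ^ i) ?_ ?_ ?_ ?_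
    · intro i _
      rw [Polynomial.mem_nthRootsFinset hn, ← pow_mul, mul_comm, pow_mul, hprim.pow_eq_one, one_pow]
    · intro i hi j hj h
      exact hprim.pow_inj (Finset.mem_range.1 hi) (Finset.mem_range.1 hj) h
    · intro z hz
      rw [Polynomial.mem_nthRootsFinset hn] at hz
      obtain ⟨i, hi, h⟩ := (have : NeZero n := ⟨hn.ne'⟩; hprim.eq_pow_of_pow_eq_one hz)
      exact ⟨i, Finset.mem_range.2 hi, h⟩
    · intro i _; rfl
  rw [himg]
  split_ifs with h
  · subst h; simp
  · exact hprim.geom_sum_eq_zero (by omega)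

lemma norm_sum_primitiveRoots (n : ℕ) (hn : 0 < n) : ‖∑ z ∈ primitiveRoots n ℂ, z‖ ≤ 1 := by
  classical
  have h := (ArithmeticFunction.sum_eq_iff_sum_smul_moebius_eq
    (f := fun n => ∑ z ∈ primitiveRoots n ℂ, z) (g := fun n => if n = 1 then (1:ℂ) else 0)).1 (by
    intro n hn
    rw [← sum_nthRoots n hn, IsPrimitiveRoot.nthRoots_one_eq_biUnion_primitiveRoots,
      Finset.sum_biUnion]
    intro i _ j _ hij
    exact IsPrimitiveRoot.disjoint hij) n hn
  rw [← h, Finset.sum_eq_single (n, 1)]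
  · simp only [if_true]
    rw [zsmul_eq_mul, mul_one]
    have := ArithmeticFunction.abs_moebius_le_one (n := n)
    rw [Complex.norm_intCast]
    exact_mod_cast this
  · rintro ⟨a, b⟩ hab hne
    rw [Nat.mem_divisorsAntidiagonal] at hab
    have : b ≠ 1 := by rintro rfl; apply hne; simp at hab; simp [hab.1]
    simp [this]
  · intro h; exact absurd (by simp [Nat.mem_divisorsAntidiagonal]; omega) h

lemma norm_sum_coprime (n : ℕ) (hn : 0 < n) :
    ‖∑ r ∈ (Finset.range n).filter (fun r => Nat.Coprime r n), Complex.exp (2 * Real.pi * Complex.I / n) ^ r‖ ≤ 1 := by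
  have hprim := Complex.isPrimitiveRoot_exp n hn.ne'
  refine le_trans (le_of_eq ?_) (norm_sum_primitiveRoots n hn)
  congr 1
  refine Finset.sum_bij (fun i _ => Complex.exp (2 * Real.pi * Complex.I / n) ^ i) ?_ ?_ ?_ ?_
  · intro i hi
    rw [Finset.mem_filter] at hi
    rw [mem_primitiveRoots hn]
    exact hprim.pow_of_coprime i hi.2
  · intro i hi j hj h
    rw [Finset.mem_filter, Finset.mem_range] at hi hj
    exact hprim.pow_inj hi.1 hj.1 h
  · intro z hz
    rw [mem_primitiveRoots hn] at hz
    obtain ⟨i, hi, hc, h⟩ := (have : NeZero n := ⟨hn.ne'⟩; (hprim.isPrimitiveRoot_iff).1 hz)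
    exact ⟨i, Finset.mem_filter.2 ⟨Finset.mem_range.2 hi, hc⟩, h⟩
  · intro i _; rfl

/-- the test function -/
noncomputable def gT (k : ℕ) (n : ℕ) : ℝ :=
  Real.cos (2 * Real.pi / k * n) - Real.cos (2 * Real.pi / k * ((n:ℝ) + 1))

lemma gT_mod (k : ℕ) (hk : 0 < k) (n : ℕ) : gT k n = gT k (n % k) := by
  have hk0 : (k:ℝ) ≠ 0 := by positivity
  unfold gT
  have e : (n:ℝ) = (n % k : ℕ) + k * (n / k : ℕ) := by exact_mod_cast (Nat.mod_add_div n k).symm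
  have e1 : 2 * Real.pi / k * n = 2 * Real.pi / k * (n % k : ℕ) + (n/k : ℕ) * (2 * Real.pi) := by
    rw [e]; field_simp
  have e2 : 2 * Real.pi / k * ((n:ℝ) + 1) = 2 * Real.pi / k * ((n % k : ℕ) + 1) + (n/k : ℕ) * (2 * Real.pi) := by
    rw [mul_add, e1]; ring
  rw [e1, e2, Real.cos_add_nat_mul_two_pi, Real.cos_add_nat_mul_two_pi]

lemma abs_cos_sub (a b : ℝ) : |Real.cos a - Real.cos b| ≤ |a - b| := Real.abs_cos_sub_cos_le a b

lemma gT_bound (k : ℕ) (hk : 0 < k) (n : ℕ) : |gT k n| ≤ 2 * Real.pi / k := by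
  unfold gT
  refine (abs_cos_sub _ _).trans ?_
  rw [← mul_sub, sub_add_cancel_left, abs_mul, abs_neg, abs_one, mul_one, abs_of_nonneg (by positivity)]

lemma gT_diff (k : ℕ) (hk : 0 < k) (n : ℕ) : |gT k n - gT k (n+1)| ≤ (2 * Real.pi / k)^2 := by
  unfold gT
  set h := 2 * Real.pi / k
  push_cast
  set x := h * ((n:ℝ)+1) with hx
  have e1 : h * n = x - h := by rw [hx]; ring
  have e2 : h * ((n:ℝ)+1+1) = x + h := by rw [hx]; ring
  rw [e1, e2, Real.cos_sub, Real.cos_add]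
  have : Real.cos x * Real.cos h + Real.sin x * Real.sin h - Real.cos x - (Real.cos x - (Real.cos x * Real.cos h - Real.sin x * Real.sin h))
    = - (2 * (1 - Real.cos h) * Real.cos x) := by ring
  rw [this, abs_neg, abs_mul]
  have h1 := Real.one_sub_sq_div_two_le_cos (x := h)
  have h2 := Real.cos_le_one h
  have h3 := Real.abs_cos_le_one x
  rw [abs_of_nonneg (by linarith)]
  nlinarith [abs_nonneg (Real.cos x)]

lemma gT_coprime (k : ℕ) (hk : 0 < k) :
    |∑ r ∈ (Finset.range k).filter (fun r => Nat.Coprime r k), gT k r| ≤ 2 * Real.pi / k := by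
  have hs := norm_sum_coprime k hk
  set h := 2 * Real.pi / k with hh
  have ee : Complex.exp (2 * Real.pi * Complex.I / k) = Complex.exp ((h:ℝ) * Complex.I) := by
    congr 1; rw [hh]; push_cast; ring
  have ep : ∀ r : ℕ, Complex.exp (2 * Real.pi * Complex.I / k)^r = Complex.exp (((h * r : ℝ)) * Complex.I) := by
    intro r; rw [ee, ← Complex.exp_nat_mul]; congr 1; push_cast; ring
  have e : ∑ r ∈ (Finset.range k).filter (fun r => Nat.Coprime r k), gT k r =
      (((1 : ℂ) - Complex.exp ((h:ℝ) * Complex.I)) * ∑ r ∈ (Finset.range k).filter (fun r => Nat.Coprime r k),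
        Complex.exp (2 * Real.pi * Complex.I / k) ^ r).re := by
    rw [Finset.mul_sum, Complex.re_sum]
    refine Finset.sum_congr rfl fun r _ => ?_
    have : Complex.exp ((h:ℝ) * Complex.I) * Complex.exp (2 * Real.pi * Complex.I / k) ^ r
        = Complex.exp (((h * ((r:ℝ)+1) : ℝ)) * Complex.I) := by
      rw [ep, ← Complex.exp_add]; congr 1; push_cast; ring
    rw [sub_mul, this, one_mul, ep, Complex.sub_re, Complex.exp_ofReal_mul_I_re, Complex.exp_ofReal_mul_I_re]
    rfl
  rw [e]
  refine (Complex.abs_re_le_norm _).trans ?_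
  rw [norm_mul]
  have h1 : ‖(1:ℂ) - Complex.exp ((h:ℝ) * Complex.I)‖ ≤ h := by
    rw [norm_sub_rev, mul_comm]
    have := Real.norm_exp_I_mul_ofReal_sub_one_le (x := h)
    rwa [Real.norm_eq_abs, abs_of_nonneg (by positivity)] at this
  calc _ ≤ h * 1 := by gcongr
    _ = h := mul_one h


lemma hyp_sum (k α β γ ι : ℕ) (hk : 0 < k)
    (hcard : ((Finset.Icc α β).filter Nat.Prime).card = γ * k.totient + ι)
    (hres : ∀ r : ℕ, r < k → Nat.Coprime r k →
        γ ≤ ((Finset.Icc α β).filter (fun p => p.Prime ∧ p % k = r)).card) :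
    |∑ p ∈ (Finset.Icc α β).filter Nat.Prime, gT k p| ≤ 2 * Real.pi / k * (ι + γ) := by
  set S := (Finset.Icc α β).filter Nat.Prime with hS
  set N : ℕ → ℕ := fun r => (S.filter (fun p => p % k = r)).card with hN
  have hmaps : ∀ p ∈ S, p % k ∈ Finset.range k := fun p _ => Finset.mem_range.2 (Nat.mod_lt _ hk)
  have h1 : ∑ p ∈ S, gT k p = ∑ r ∈ Finset.range k, (N r : ℝ) * gT k r := by
    rw [← Finset.sum_fiberwise_of_maps_to hmaps]
    refine Finset.sum_congr rfl fun r _ => ?_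
    rw [Finset.sum_congr rfl (g := fun _ => gT k r)]
    · simp [hN]
    · intro p hp
      rw [gT_mod k hk p, (Finset.mem_filter.1 hp).2]
  have h2 : ∑ r ∈ Finset.range k, (N r : ℝ) = γ * k.totient + ι := by
    have : S.card = ∑ r ∈ Finset.range k, N r := Finset.card_eq_sum_card_fiberwise hmaps
    rw [hcard] at this
    exact_mod_cast this.symm
  set δ : ℕ → ℝ := fun r => if Nat.Coprime r k then (γ:ℝ) else 0 with hδ
  have h3 : ∑ r ∈ Finset.range k, δ r = γ * k.totient := by
    simp only [hδ]
    rw [← Finset.sum_filter, Finset.sum_const, nsmul_eq_mul, mul_comm, Nat.totient_eq_card_coprime]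
    simp_rw [Nat.coprime_comm]
  have h4 : ∀ r ∈ Finset.range k, 0 ≤ (N r : ℝ) - δ r := by
    intro r hr
    simp only [hδ]
    split_ifs with h
    · have := hres r (Finset.mem_range.1 hr) h
      have e : (Finset.Icc α β).filter (fun p => p.Prime ∧ p % k = r) = S.filter (fun p => p % k = r) := by
        rw [hS, Finset.filter_filter]
      rw [e] at this
      rw [sub_nonneg]
      exact_mod_cast this
    · simp
  have h5 : ∑ r ∈ Finset.range k, δ r * gT k r
      = γ * ∑ r ∈ (Finset.range k).filter (fun r => Nat.Coprime r k), gT k r := by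
    simp only [hδ]
    rw [Finset.mul_sum, Finset.sum_filter]
    refine Finset.sum_congr rfl fun r _ => ?_
    split_ifs <;> simp
  have h6 : ∑ p ∈ S, gT k p = ∑ r ∈ Finset.range k, ((N r : ℝ) - δ r) * gT k r
      + γ * ∑ r ∈ (Finset.range k).filter (fun r => Nat.Coprime r k), gT k r := by
    rw [h1, ← h5, ← Finset.sum_add_distrib]
    refine Finset.sum_congr rfl fun r _ => ?_
    ring
  have h7 : |∑ r ∈ Finset.range k, ((N r : ℝ) - δ r) * gT k r| ≤ 2 * Real.pi / k * ι := by
    calc _ ≤ ∑ r ∈ Finset.range k, |((N r : ℝ) - δ r) * gT k r| := Finset.abs_sum_le_sum_abs _ _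
      _ ≤ ∑ r ∈ Finset.range k, ((N r : ℝ) - δ r) * (2 * Real.pi / k) := by
        refine Finset.sum_le_sum fun r hr => ?_
        rw [abs_mul, abs_of_nonneg (h4 r hr)]
        exact mul_le_mul_of_nonneg_left (gT_bound k hk r) (h4 r hr)
      _ = _ := by rw [← Finset.sum_mul, Finset.sum_sub_distrib, h2, h3]; ring
  rw [h6]
  refine (abs_add_le _ _).trans ?_
  rw [abs_mul, Nat.abs_cast, mul_add]
  have := mul_le_mul_of_nonneg_left (gT_coprime k hk) (Nat.cast_nonneg γ (α := ℝ))
  linarith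

lemma switch_sum (f : ℕ → ℝ) (B : ℝ) (hB : 0 ≤ B) (hf : ∀ n, |f n| ≤ B) (α a β : ℕ) :
    |∑ p ∈ (Finset.Icc α β).filter Nat.Prime, f p - ∑ p ∈ (Finset.Ioc a β).filter Nat.Prime, f p|
      ≤ B * (|(α:ℝ) - a| + 1) := by
  classical
  have key : ∀ s t : Finset ℕ, t ⊆ s → ∀ c : ℝ, ((s \ t).card : ℝ) ≤ c → 
      |∑ p ∈ s.filter Nat.Prime, f p - ∑ p ∈ t.filter Nat.Prime, f p| ≤ B * c := by
    intro s t hst c hc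
    rw [Finset.sum_filter, Finset.sum_filter, ← Finset.sum_sdiff hst, add_sub_cancel_right]
    calc _ ≤ ∑ n ∈ s \ t, |if n.Prime then f n else 0| := Finset.abs_sum_le_sum_abs _ _
      _ ≤ ∑ n ∈ s \ t, B := by
        refine Finset.sum_le_sum fun n _ => ?_
        split_ifs
        · exact hf n
        · simpa using hB
      _ = B * (s \ t).card := by simp [mul_comm]
      _ ≤ B * c := by gcongr
  rcases le_or_gt α (a+1) with h | h
  · refine key _ _ (by intro n; simp only [Finset.mem_Ioc, Finset.mem_Icc]; omega) _ ?_
    have : Finset.Icc α β \ Finset.Ioc a β ⊆ Finset.Ico α (a+1) := by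
      intro n; simp only [Finset.mem_sdiff, Finset.mem_Ioc, Finset.mem_Icc, Finset.mem_Ico]; omega
    have h2 := Finset.card_le_card this
    rw [Nat.card_Ico] at h2
    have h3 : ((Finset.Icc α β \ Finset.Ioc a β).card : ℝ) ≤ ((a + 1 - α : ℕ):ℝ) := by exact_mod_cast h2
    rw [Nat.cast_sub h] at h3
    push_cast at h3
    have := neg_abs_le ((α:ℝ) - a)
    linarith
  · rw [abs_sub_comm]
    refine key _ _ (by intro n; simp only [Finset.mem_Ioc, Finset.mem_Icc]; omega) _ ?_
    have : Finset.Ioc a β \ Finset.Icc α β ⊆ Finset.Ico (a+1) α := by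
      intro n; simp only [Finset.mem_sdiff, Finset.mem_Ioc, Finset.mem_Icc, Finset.mem_Ico]; omega
    have h2 := Finset.card_le_card this
    rw [Nat.card_Ico] at h2
    have h3 : ((Finset.Ioc a β \ Finset.Icc α β).card : ℝ) ≤ ((α - (a + 1) : ℕ):ℝ) := by exact_mod_cast h2
    rw [Nat.cast_sub h.le] at h3
    push_cast at h3
    have := le_abs_self ((α:ℝ) - a)
    linarith

/-- telescoping of 1/log -/
lemma tele (u : ℕ → ℝ) (a b : ℕ) (hab : a ≤ b) :
    ∑ n ∈ Finset.Ioc a b, (u n - u (n+1)) = u (a+1) - u (b+1) := by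
  induction b, hab using Nat.le_induction with
  | base => simp
  | succ j hj ih =>
    have hins : Finset.Ioc a (j+1) = insert (j+1) (Finset.Ioc a j) := by
      ext i; simp only [Finset.mem_Ioc, Finset.mem_insert]; omega
    rw [hins, Finset.sum_insert (by simp), ih]; ring

lemma one_lt_log_three {n : ℕ} (hn : 3 ≤ n) : 1 ≤ Real.log n := by
  have h3 : (3:ℝ) ≤ n := by exact_mod_cast hn
  rw [Real.le_log_iff_exp_le (by linarith)]
  linarith [Real.exp_one_lt_d9]

lemma inv_log_anti {n : ℕ} (hn : 3 ≤ n) : (Real.log (n+1:ℕ))⁻¹ ≤ (Real.log n)⁻¹ := by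
  have h1 := one_lt_log_three hn
  apply inv_anti₀ (by linarith)
  have : (3:ℝ) ≤ n := by exact_mod_cast hn
  exact Real.log_le_log (by linarith) (by push_cast; linarith)

lemma smooth_lower (lam k β : ℕ) (hk : 16 ≤ k) (hkl : lam + 2 ≤ k) (hβ : (lam + 2) * k ≤ β) :
    1 / (32 * ((lam:ℝ)+2) * (Real.log k)^2) - 5 * (2 * Real.pi / k)^2 ≤
      ∑ n ∈ Finset.Ioc (lam * k + 2) β, gT k n * (Real.log n)⁻¹ := by
  set h := 2 * Real.pi / k with hh
  set G : ℕ → ℝ := fun n => 1 - Real.cos (h * n) with hG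
  set u : ℕ → ℝ := fun n => (Real.log n)⁻¹ with hu
  set a := lam * k + 2 with ha
  have hk0 : (0:ℝ) < k := by exact_mod_cast (by omega : 0 < k)
  have hkk : (lam + 1) * k = lam * k + k := by ring
  have hkk2 : (lam + 2) * k = lam * k + 2 * k := by ring
  have hG0 : ∀ n, 0 ≤ G n := fun n => by simp only [hG]; linarith [Real.cos_le_one (h*n)]
  have hu0 : ∀ n, 0 ≤ u n := fun n => inv_nonneg.2 (Real.log_natCast_nonneg n)
  have hu1 : ∀ n, 3 ≤ n → 0 ≤ u n - u (n+1) := fun n hn => sub_nonneg.2 (inv_log_anti hn)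
  have e1 : ∀ n, gT k n * u n = (-(G n * u n) - -(G (n+1) * u (n+1))) + G (n+1) * (u n - u (n+1)) := by
    intro n
    simp only [gT, hG, ← hh]; push_cast; ring
  have hab : a ≤ β := by omega
  have e2 : ∑ n ∈ Finset.Ioc a β, gT k n * u n = (-(G (a+1) * u (a+1)) - -(G (β+1) * u (β+1)))
      + ∑ n ∈ Finset.Ioc a β, G (n+1) * (u n - u (n+1)) := by
    simp_rw [e1]
    rw [Finset.sum_add_distrib, tele (fun n => -(G n * u n)) a β hab]
  rw [show (∑ n ∈ Finset.Ioc a β, gT k n * (Real.log n)⁻¹) = ∑ n ∈ Finset.Ioc a β, gT k n * u n from rfl, e2]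
  have hGa : G (a+1) * u (a+1) ≤ 5 * h^2 := by
    have g1 : G (a+1) ≤ 5 * h^2 := by
      simp only [hG]
      have : h * ((a+1:ℕ):ℝ) = 3 * h + lam * (2 * Real.pi) := by
        rw [ha, hh]; push_cast; field_simp; ring
      rw [this, Real.cos_add_nat_mul_two_pi]
      have := Real.one_sub_sq_div_two_le_cos (x := 3*h)
      nlinarith [sq_nonneg h]
    have u1 : u (a+1) ≤ 1 := inv_le_one_of_one_le₀ (one_lt_log_three (by omega))
    calc _ ≤ 5 * h^2 * 1 := mul_le_mul g1 u1 (hu0 _) (by positivity)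
      _ = _ := mul_one _
  have hGb : 0 ≤ G (β+1) * u (β+1) := mul_nonneg (hG0 _) (hu0 _)
  set n1 := (lam+1) * k + k/4 with hn1
  set n2 := (lam+1) * k + k/2 with hn2
  have hsub : Finset.Ioc n1 n2 ⊆ Finset.Ioc a β := by
    intro n; simp only [Finset.mem_Ioc]; omega
  have hmain : ∑ n ∈ Finset.Ioc n1 n2, (u n - u (n+1)) ≤ ∑ n ∈ Finset.Ioc a β, G (n+1) * (u n - u (n+1)) := by
    refine le_trans (Finset.sum_le_sum (g := fun n => G (n+1) * (u n - u (n+1))) fun n hn => ?_)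
      (Finset.sum_le_sum_of_subset_of_nonneg hsub fun n hn _ => ?_)
    · rw [Finset.mem_Ioc] at hn
      have hn3 : 3 ≤ n := by omega
      refine le_mul_of_one_le_left (hu1 n hn3) ?_
      simp only [hG]
      obtain ⟨j, hj⟩ : ∃ j, n + 1 = (lam+1) * k + j := ⟨n + 1 - (lam+1)*k, by omega⟩
      have hj1 : k ≤ 4 * j := by omega
      have hj2 : 4 * j ≤ 3 * k := by omega
      have hj1' : (k:ℝ) ≤ 4 * j := by exact_mod_cast hj1
      have hj2' : (4:ℝ) * j ≤ 3 * k := by exact_mod_cast hj2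
      have : h * ((n+1:ℕ):ℝ) = h * j + (lam+1:ℕ) * (2 * Real.pi) := by
        rw [hj, hh]; push_cast; field_simp; ring
      rw [this, Real.cos_add_nat_mul_two_pi]
      have c1 : Real.pi/2 ≤ h * j := by
        rw [hh, div_mul_eq_mul_div, div_le_div_iff₀ (by norm_num) hk0]
        nlinarith [Real.pi_pos]
      have c2 : h * j ≤ Real.pi + Real.pi/2 := by
        rw [hh, div_mul_eq_mul_div, div_le_iff₀ hk0]
        nlinarith [Real.pi_pos]
      linarith [Real.cos_nonpos_of_pi_div_two_le_of_le c1 c2]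
    · rw [Finset.mem_Ioc] at hn
      exact mul_nonneg (hG0 _) (hu1 n (by omega))
  rw [tele u n1 n2 (by omega)] at hmain
  have hfin : 1 / (32 * ((lam:ℝ)+2) * (Real.log k)^2) ≤ u (n1+1) - u (n2+1) := by
    simp only [hu]
    set l1 := Real.log (n1+1:ℕ) with hl1
    set l2 := Real.log (n2+1:ℕ) with hl2
    have p1 : 1 ≤ l1 := one_lt_log_three (by omega)
    have hn1R : (0:ℝ) < (n1+1:ℕ) := by positivity
    have hn2R : (0:ℝ) < (n2+1:ℕ) := by positivity
    have hle : (n2+1:ℕ) ≤ (lam+2) * k := by omega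
    have hleR : ((n2+1:ℕ):ℝ) ≤ ((lam:ℝ)+2) * k := by exact_mod_cast hle
    have p2 : l2 ≤ 2 * Real.log k := by
      have : l2 ≤ Real.log ((k:ℝ) * k) := Real.log_le_log hn2R (hleR.trans (by
        have : ((lam:ℝ)+2) ≤ k := by exact_mod_cast hkl
        gcongr))
      rw [Real.log_mul hk0.ne' hk0.ne'] at this
      linarith
    have p3 : 1 / (8 * ((lam:ℝ)+2)) ≤ l2 - l1 := by
      have := Real.one_sub_inv_le_log_of_pos (x := ((n2+1:ℕ):ℝ) / (n1+1:ℕ)) (by positivity)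
      rw [Real.log_div hn2R.ne' hn1R.ne', inv_div] at this
      refine le_trans ?_ this
      rw [one_sub_div hn2R.ne', div_le_div_iff₀ (by positivity) hn2R]
      have : k ≤ 8 * (n2 - n1) := by omega
      have h8 : (k:ℝ) ≤ 8 * ((n2+1:ℕ) - (n1+1:ℕ)) := by
        have h9 : (n2+1) = (n1+1) + (n2-n1) := by omega
        have h10 : ((n2+1:ℕ):ℝ) = (n1+1:ℕ) + (n2-n1:ℕ) := by exact_mod_cast h9
        rw [h10, add_sub_cancel_left]
        exact_mod_cast this
      have : (0:ℝ) < (lam:ℝ)+2 := by positivity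
      nlinarith
    have p4 : l1 ≤ l2 := by
      have : 0 < 1 / (8 * ((lam:ℝ)+2)) := by positivity
      linarith
    have p5 : l1 * l2 ≤ 4 * (Real.log k)^2 := by nlinarith
    have p6 : l1⁻¹ - l2⁻¹ = (l2 - l1) / (l1 * l2) := by
      have : l1 ≠ 0 := by linarith
      have : l2 ≠ 0 := by linarith
      field_simp
    rw [p6]
    have p7 : 0 < l1 * l2 := by nlinarith
    calc _ = 1 / (8 * ((lam:ℝ)+2)) / (4 * (Real.log k)^2) := by rw [div_div]; ring_nf
      _ ≤ (l2 - l1) / (l1 * l2) := by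
        apply div_le_div₀ _ p3 p7 p5
        have : 0 < 1 / (8 * ((lam:ℝ)+2)) := by positivity
        linarith
  linarith


lemma odd_prod_aux (S : Finset ℕ) : (∀ n ∈ S, 3 ≤ n ∧ Odd n) →
    (1:ℝ) / (2 * S.card + 1) ≤ ∏ n ∈ S, (1 - 2 / (n:ℝ)) ∧ (∀ n, (∀ x ∈ S, x < n) → Odd n → 3 ≤ n → 2 * S.card + 3 ≤ n) := by
  induction S using Finset.induction_on_max with
  | empty => intro _; simp
  | insert a s hlt ih =>
    intro h
    have has : a ∉ s := fun h => lt_irrefl _ (hlt a h)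
    obtain ⟨h1, h2⟩ := ih (fun n hn => h n (Finset.mem_insert_of_mem hn))
    have ha := h a (Finset.mem_insert_self _ _)
    have hc := h2 a hlt ha.2 ha.1
    rw [Finset.card_insert_of_notMem has, Finset.prod_insert has]
    refine ⟨?_, ?_⟩
    · have hc' : 2 * (s.card:ℝ) + 3 ≤ a := by exact_mod_cast hc
      have hs0 : (0:ℝ) ≤ s.card := by positivity
      have h3 : 1 - 2 / (2 * (s.card:ℝ) + 3) ≤ 1 - 2 / (a:ℝ) := by
        gcongr
      have h4 : (1:ℝ) - 2 / (2 * (s.card:ℝ) + 3) = (2 * s.card + 1) / (2 * s.card + 3) := by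
        field_simp; ring
      have h5 : (0:ℝ) ≤ (2 * s.card + 1) / (2 * s.card + 3) := by positivity
      calc (1:ℝ) / (2 * ((s.card + 1 : ℕ):ℝ) + 1) = (2 * s.card + 1) / (2 * s.card + 3) * (1 / (2 * s.card + 1)) := by
            push_cast; field_simp; ring
        _ ≤ _ := by
            rw [← h4]
            apply mul_le_mul h3 h1 (by positivity)
            rw [h4] at h3; linarith
    · intro n hn hodd hn3
      have h6 := hn a (Finset.mem_insert_self _ _)
      have h7 : Odd a := ha.2
      obtain ⟨x, rfl⟩ := h7
      obtain ⟨y, rfl⟩ := hodd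
      omega

lemma totient_lower (k : ℕ) (hk : 16 ≤ k) : (k:ℝ)^2 ≤ 20 * Real.log k * (k.totient:ℝ)^2 := by
  have hk0 : 0 < k := by omega
  have hT : (k.totient : ℝ) = k * ∏ p ∈ k.primeFactors, (1 - (p:ℝ)⁻¹) := by
    have := Nat.totient_eq_mul_prod_factors k
    have h2 := congrArg (fun q : ℚ => (q : ℝ)) this
    push_cast at h2
    exact h2
  have hl := two_le_log hk
  have hsplit : 1 / (4 * (2 * (k.primeFactors.card:ℝ) + 1)) ≤ (∏ p ∈ k.primeFactors, (1 - (p:ℝ)⁻¹))^2 := by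
    have h1 : (∏ p ∈ k.primeFactors.erase 2, (1 - (p:ℝ)⁻¹))^2 ≥ 1 / (2 * (k.primeFactors.card:ℝ) + 1) := by
      have hS : ∀ n ∈ k.primeFactors.erase 2, 3 ≤ n ∧ Odd n := by
        intro n hn
        rw [Finset.mem_erase] at hn
        have hp := Nat.prime_of_mem_primeFactors hn.2
        refine ⟨?_, hp.odd_of_ne_two hn.1⟩
        have := hp.two_le
        have := hn.1
        omega
      have h2 := (odd_prod_aux _ hS).1
      have hcard : ((k.primeFactors.erase 2).card:ℝ) ≤ k.primeFactors.card := by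
        exact_mod_cast Finset.card_le_card (Finset.erase_subset _ _)
      rw [← Finset.prod_pow]
      calc 1 / (2 * (k.primeFactors.card:ℝ) + 1) ≤ 1 / (2 * ((k.primeFactors.erase 2).card:ℝ) + 1) := by
            gcongr
        _ ≤ _ := h2
        _ ≤ _ := by
          apply Finset.prod_le_prod
          · intro i hi
            have : (3:ℝ) ≤ i := by exact_mod_cast (hS i hi).1
            have : 2 / (i:ℝ) ≤ 1 := by rw [div_le_one (by linarith)]; linarith
            linarith
          · intro i hi
            have : (1 - (i:ℝ)⁻¹)^2 = 1 - 2 / i + ((i:ℝ)⁻¹)^2 := by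
              rw [div_eq_mul_inv]; ring
            rw [this]
            nlinarith [sq_nonneg ((i:ℝ)⁻¹)]
    have hn : (0:ℝ) ≤ 1 / (2 * (k.primeFactors.card:ℝ) + 1) := by positivity
    have h3 : 1 / (4 * (2 * (k.primeFactors.card:ℝ) + 1)) = 1/4 * (1 / (2 * (k.primeFactors.card:ℝ) + 1)) := by
      field_simp
    by_cases h2 : 2 ∈ k.primeFactors
    · rw [← Finset.mul_prod_erase _ _ h2, mul_pow, h3]
      norm_num at h1 ⊢
      linarith
    · rw [Finset.erase_eq_of_notMem h2] at h1
      rw [h3]; linarith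
  have hom : (k.primeFactors.card:ℝ) ≤ 2 * Real.log k := by
    have h1 : 2 ^ k.primeFactors.card ≤ k := by
      calc 2 ^ k.primeFactors.card = ∏ p ∈ k.primeFactors, 2 := by simp
        _ ≤ ∏ p ∈ k.primeFactors, p := by
            apply Finset.prod_le_prod'
            intro i hi; exact (Nat.prime_of_mem_primeFactors hi).two_le
        _ ≤ k := Nat.le_of_dvd hk0 (Nat.prod_primeFactors_dvd k)
    have h2 : Real.log ((2:ℝ) ^ k.primeFactors.card) ≤ Real.log k := by
      apply Real.log_le_log (by positivity)
      exact_mod_cast h1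
    rw [Real.log_pow] at h2
    have := Real.log_two_gt_d9
    have h0 : (0:ℝ) ≤ k.primeFactors.card := by positivity
    nlinarith
  rw [hT, mul_pow]
  have h5 : 1 ≤ 20 * Real.log k * (∏ p ∈ k.primeFactors, (1 - (p:ℝ)⁻¹))^2 := by
    have h6 : 1 / (20 * Real.log k) ≤ 1 / (4 * (2 * (k.primeFactors.card:ℝ) + 1)) := by
      apply one_div_le_one_div_of_le (by positivity)
      nlinarith
    have h7 := h6.trans hsplit
    rw [div_le_iff₀ (by positivity)] at h7
    linarith
  nlinarith [sq_nonneg (k:ℝ)]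


lemma theta_partial (a i : ℕ) (h : a ≤ i) :
    ∑ n ∈ Finset.Ioc a i, ((if n.Prime then Real.log n else 0) - 1) =
      (Chebyshev.theta i - i) - (Chebyshev.theta a - a) := by
  induction i, h using Nat.le_induction with
  | base => simp
  | succ i h ih =>
    rw [Finset.sum_Ioc_succ_top (by omega), ih]
    have : Chebyshev.theta ((i+1:ℕ):ℝ) = Chebyshev.theta i + (if (i+1).Prime then Real.log (i+1:ℕ) else 0) := by
      unfold Chebyshev.theta
      rw [Nat.floor_natCast, Nat.floor_natCast, Finset.sum_filter, Finset.sum_filter, Finset.sum_Ioc_succ_top (by omega)]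
    rw [this]; push_cast; ring

lemma prime_sum_lower (M : ℕ) (hM : 2 ≤ M) : ∃ C : ℝ, 0 ≤ C ∧ ∃ n0 : ℕ, 16 ≤ n0 ∧
    ∀ lam k β : ℕ, 16 ≤ k → lam + 2 ≤ k → (lam+2)*k ≤ β → n0 ≤ β →
      1/(32*((lam:ℝ)+2)*(Real.log k)^2) - 5*(2*Real.pi/k)^2
        - 2 * (C * (β / (Real.log β)^M)) * (2 * (2*Real.pi/k) + β * (2*Real.pi/k)^2)
      ≤ ∑ p ∈ (Finset.Ioc (lam*k+2) β).filter Nat.Prime, gT k p := by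
  obtain ⟨C, hC, n0, hn0, H⟩ := theta_unif M hM
  refine ⟨C, hC, n0, hn0, ?_⟩
  intro lam k β hk hkl hβ hβ0
  have hs := smooth_lower lam k β hk hkl hβ
  set a := lam*k+2 with ha
  set h := 2*Real.pi/k with hh
  set E := C * (β / (Real.log β)^M) with hE
  have hk0 : 0 < k := by omega
  have hh0 : 0 ≤ h := by positivity
  have hab : a ≤ β := by nlinarith
  have hE0 : 0 ≤ E := by
    have : 2 ≤ Real.log β := two_le_log (by omega)
    positivity
  have key := abel_bound (fun n => (if n.Prime then Real.log n else 0) - 1)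
    (fun n => gT k n * (Real.log n)⁻¹) a (2*E) β hab (by
      intro i hi hi2
      rw [theta_partial a i hi]
      have h1 := H β hβ0 i hi2
      have h2 := H β hβ0 a hab
      refine (abs_sub _ _).trans ?_
      linarith)
  have hu : ∀ n : ℕ, 3 ≤ n → 0 ≤ (Real.log n)⁻¹ ∧ (Real.log n)⁻¹ ≤ 1 := by
    intro n hn
    have := one_lt_log_three hn
    exact ⟨by positivity, inv_le_one_of_one_le₀ this⟩
  have htv : |gT k (β+1) * (Real.log (β+1:ℕ))⁻¹| + ∑ i ∈ Finset.Ioc a β,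
      |gT k i * (Real.log i)⁻¹ - gT k (i+1) * (Real.log (i+1:ℕ))⁻¹| ≤ 2 * h + β * h^2 := by
    have h1 : |gT k (β+1) * (Real.log (β+1:ℕ))⁻¹| ≤ h * (Real.log (β+1:ℕ))⁻¹ := by
      rw [abs_mul, abs_of_nonneg (hu (β+1) (by omega)).1]
      exact mul_le_mul_of_nonneg_right (gT_bound k hk0 _) (hu (β+1) (by omega)).1
    have h2 : ∑ i ∈ Finset.Ioc a β, |gT k i * (Real.log i)⁻¹ - gT k (i+1) * (Real.log (i+1:ℕ))⁻¹|
        ≤ ∑ i ∈ Finset.Ioc a β, (h^2 + h * ((Real.log i)⁻¹ - (Real.log (i+1:ℕ))⁻¹)) := by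
      refine Finset.sum_le_sum fun i hi => ?_
      rw [Finset.mem_Ioc] at hi
      have hi3 : 3 ≤ i := by omega
      have e : gT k i * (Real.log i)⁻¹ - gT k (i+1) * (Real.log (i+1:ℕ))⁻¹
        = (gT k i - gT k (i+1)) * (Real.log i)⁻¹ + gT k (i+1) * ((Real.log i)⁻¹ - (Real.log (i+1:ℕ))⁻¹) := by ring
      rw [e]
      refine (abs_add_le _ _).trans ?_
      rw [abs_mul, abs_mul, abs_of_nonneg (hu i hi3).1, abs_of_nonneg (sub_nonneg.2 (inv_log_anti hi3))]
      have g1 := gT_diff k hk0 i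
      have g2 := gT_bound k hk0 (i+1)
      have := inv_log_anti hi3
      refine add_le_add ?_ ?_
      · calc _ ≤ h^2 * 1 := mul_le_mul g1 (hu i hi3).2 (hu i hi3).1 (by positivity)
          _ = _ := mul_one _
      · exact mul_le_mul_of_nonneg_right g2 (sub_nonneg.2 this)
    have h3 : ∑ i ∈ Finset.Ioc a β, (h^2 + h * ((Real.log i)⁻¹ - (Real.log (i+1:ℕ))⁻¹))
        = ((β:ℝ) - a) * h^2 + h * ((Real.log (a+1:ℕ))⁻¹ - (Real.log (β+1:ℕ))⁻¹) := by
      rw [Finset.sum_add_distrib, ← Finset.mul_sum]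
      have := tele (fun n : ℕ => (Real.log n)⁻¹) a β hab
      rw [this]
      simp [Nat.cast_sub hab]
    rw [h3] at h2
    have h4 := (hu (a+1) (by omega)).2
    have h5 : (0:ℝ) ≤ a * h^2 := by positivity
    have h6 : h * (Real.log (a+1:ℕ))⁻¹ ≤ h * 1 := mul_le_mul_of_nonneg_left h4 hh0
    linarith
  have key2 := key.trans (mul_le_mul_of_nonneg_left htv (by positivity))
  have hsum : ∑ i ∈ Finset.Ioc a β, ((if i.Prime then Real.log i else 0) - 1) * (gT k i * (Real.log i)⁻¹)
      = ∑ p ∈ (Finset.Ioc a β).filter Nat.Prime, gT k p - ∑ n ∈ Finset.Ioc a β, gT k n * (Real.log n)⁻¹ := by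
    rw [Finset.sum_filter, ← Finset.sum_sub_distrib]
    refine Finset.sum_congr rfl fun i hi => ?_
    rw [Finset.mem_Ioc] at hi
    have hl := one_lt_log_three (n := i) (by omega)
    have hl0 : Real.log i ≠ 0 := by linarith
    split_ifs
    · field_simp
    · ring
  rw [hsum] at key2
  have := (abs_le.1 key2).1
  linarith


lemma tend_log_pow (n : ℕ) (d : ℝ) (hd : 0 < d) :
    Filter.Tendsto (fun k : ℕ => (Real.log k)^n * (k:ℝ)^(-d)) Filter.atTop (nhds 0) := by
  have h := (isLittleO_log_rpow_rpow_atTop (n:ℝ) hd).tendsto_div_nhds_zero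
  have h2 := h.comp tendsto_natCast_atTop_atTop (α := ℕ)
  refine h2.congr fun k => ?_
  simp only [Function.comp]
  rw [Real.rpow_natCast, Real.rpow_neg (Nat.cast_nonneg k), div_eq_mul_inv]

lemma tend_log_nat : Filter.Tendsto (fun k : ℕ => Real.log k) Filter.atTop Filter.atTop :=
  Real.tendsto_log_atTop.comp tendsto_natCast_atTop_atTop

lemma beta_large (lam : ℕ) : ∀ᶠ k : ℕ in Filter.atTop, ∀ α β γ ι : ℕ, 1 ≤ α → 1 ≤ γ →
    ((Finset.Icc α β).filter Nat.Prime).card = γ * k.totient + ι → (lam+2)*k ≤ β := by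
  have h1 := Chebyshev.eventually_primeCounting_le (ε := 1) one_pos
  have ht : Filter.Tendsto (fun k : ℕ => (((lam+2)*k : ℕ):ℝ)) Filter.atTop Filter.atTop :=
    tendsto_natCast_atTop_atTop.comp
      (Filter.tendsto_atTop_mono (fun k => by show k ≤ (lam+2)*k; nlinarith) Filter.tendsto_id)
  filter_upwards [ht.eventually h1, Filter.eventually_ge_atTop 16,
    tend_log_nat.eventually_gt_atTop (180 * ((lam:ℝ)+2)^2)] with k hπ hk hlog
  intro α β γ ι hα hγ hcard
  by_contra hlt
  push Not at hlt
  have hk0 : (0:ℝ) < k := by exact_mod_cast (by omega : 0 < k)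
  have hl := two_le_log hk
  rw [Nat.floor_natCast] at hπ
  have hsub : k.totient ≤ Nat.primeCounting ((lam+2)*k) := by
    calc k.totient ≤ γ * k.totient + ι := by nlinarith
      _ = ((Finset.Icc α β).filter Nat.Prime).card := hcard.symm
      _ ≤ _ := by
        rw [Nat.primeCounting, Nat.primeCounting', Nat.count_eq_card_filter_range]
        apply Finset.card_le_card
        intro p hp
        simp only [Finset.mem_filter, Finset.mem_Icc, Finset.mem_range] at hp ⊢
        exact ⟨by omega, hp.2⟩
  have hlog4 : Real.log 4 ≤ 2 := by
    have : Real.log 4 = 2 * Real.log 2 := by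
      rw [show (4:ℝ) = 2^2 by norm_num, Real.log_pow]; norm_num
    have := Real.log_two_lt_d9
    linarith
  have hll : Real.log k ≤ Real.log (((lam+2)*k : ℕ):ℝ) := by
    apply Real.log_le_log hk0
    exact_mod_cast (by nlinarith : k ≤ (lam+2)*k)
  have hφ : (k.totient:ℝ) ≤ 3 * (((lam:ℝ)+2) * k) / Real.log k := by
    calc (k.totient:ℝ) ≤ Nat.primeCounting ((lam+2)*k) := by exact_mod_cast hsub
      _ ≤ _ := hπ
      _ ≤ _ := by
        push_cast at hll ⊢
        gcongr
        linarith
  rw [le_div_iff₀ (by linarith)] at hφ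
  have htl := totient_lower k hk
  have hφ0 : (0:ℝ) ≤ k.totient := by positivity
  set L := Real.log k
  have h3 : ((k.totient:ℝ) * L)^2 ≤ (3 * (((lam:ℝ)+2) * k))^2 := by
    apply pow_le_pow_left₀ (by positivity) hφ
  have h4 : (k:ℝ)^2 * L ≤ 20 * (3 * (((lam:ℝ)+2) * k))^2 := by nlinarith
  have h5 : (k:ℝ)^2 * L ≤ (k:ℝ)^2 * (180 * ((lam:ℝ)+2)^2) := by nlinarith
  have h6 := le_of_mul_le_mul_left h5 (by positivity)
  linarith

set_option maxHeartbeats 1600000 in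
theorem finitely_many_P_integers (d₁ d₂ d₃ C₁ C₂ C₃ : ℝ)
    (hd₁ : 0 < d₁) (hd₂ : 0 < d₂) (hd₃ : 0 < d₃)
    (hC₁ : 0 < C₁) (hC₂ : 0 < C₂) (hC₃ : 0 < C₃) (lam : ℕ) :
    {k : ℕ | 0 < k ∧ ∃ α β γ ι : ℕ, 1 ≤ α ∧ 1 ≤ β ∧ 1 ≤ γ ∧
      |(α : ℝ) - lam * k| ≤ C₁ * (k : ℝ) ^ ((1 : ℝ) - d₁) ∧
      (ι : ℝ) ≤ C₂ * (k : ℝ) ^ ((1 : ℝ) - d₂) ∧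
      (β : ℝ) ≤ C₃ * k * (Real.log k) ^ d₃ ∧
      ((Finset.Icc α β).filter Nat.Prime).card = γ * k.totient + ι ∧
      (∀ r : ℕ, r < k → Nat.Coprime r k →
        γ ≤ ((Finset.Icc α β).filter (fun p => p.Prime ∧ p % k = r)).card)}.Finite := by
  set D := ⌈d₃⌉₊ with hD
  obtain ⟨C, hC, n0, hn0, H⟩ := prime_sum_lower (2*D+3) (by omega)
  set c : ℝ := 1 / (32 * ((lam:ℝ)+2)) with hc
  have hc0 : 0 < c := by positivity
  set K : ℝ := 2 * C * C₃ * (14 + 49 * C₃) with hK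
  have hlim : Filter.Tendsto (fun k : ℕ =>
      245 * ((Real.log k)^2 * (k:ℝ)^(-1:ℝ)) + K * (Real.log k)⁻¹
      + 7 * C₁ * ((Real.log k)^2 * (k:ℝ)^(-d₁)) + 21 * ((Real.log k)^2 * (k:ℝ)^(-1:ℝ))
      + 7 * C₂ * ((Real.log k)^2 * (k:ℝ)^(-d₂))
      + 140 * C₃ * ((Real.log k)^(D+3) * (k:ℝ)^(-1:ℝ))) Filter.atTop
      (nhds (245 * 0 + K * 0 + 7 * C₁ * 0 + 21 * 0 + 7 * C₂ * 0 + 140 * C₃ * 0)) := by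
    have t1 := tend_log_pow 2 1 one_pos
    have t2 := tend_log_pow 2 d₁ hd₁
    have t3 := tend_log_pow 2 d₂ hd₂
    have t4 := tend_log_pow (D+3) 1 one_pos
    have t5 := tend_log_nat.inv_tendsto_atTop
    exact (((((t1.const_mul _).add (t5.const_mul _)).add (t2.const_mul _)).add
      (t1.const_mul _)).add (t3.const_mul _)).add (t4.const_mul _)
  simp only [mul_zero, add_zero] at hlim
  have hev := hlim.eventually_lt_const hc0
  suffices hs : ∀ᶠ k : ℕ in Filter.atTop, ¬ (0 < k ∧ ∃ α β γ ι : ℕ, 1 ≤ α ∧ 1 ≤ β ∧ 1 ≤ γ ∧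
      |(α : ℝ) - lam * k| ≤ C₁ * (k : ℝ) ^ ((1 : ℝ) - d₁) ∧
      (ι : ℝ) ≤ C₂ * (k : ℝ) ^ ((1 : ℝ) - d₂) ∧
      (β : ℝ) ≤ C₃ * k * (Real.log k) ^ d₃ ∧
      ((Finset.Icc α β).filter Nat.Prime).card = γ * k.totient + ι ∧
      (∀ r : ℕ, r < k → Nat.Coprime r k →
        γ ≤ ((Finset.Icc α β).filter (fun p => p.Prime ∧ p % k = r)).card)) by
    rw [Filter.eventually_atTop] at hs
    obtain ⟨N, hN⟩ := hs
    refine (Set.finite_lt_nat N).subset fun k hk => ?_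
    by_contra hkN
    exact hN k (not_lt.1 hkN) hk
  filter_upwards [hev, beta_large lam, Filter.eventually_ge_atTop 16,
    Filter.eventually_ge_atTop (lam+2), Filter.eventually_ge_atTop n0] with k hsmall hbl hk16 hkl hkn0
  rintro ⟨hk0, α, β, γ, ι, hα, hβ, hγ, hαk, hι, hβk, hcard, hres⟩
  have hβl := hbl α β γ ι hα hγ hcard
  have hkβ : k ≤ β := le_trans (by nlinarith) hβl
  have hmain := H lam k β hk16 hkl hβl (by omega)
  have hhyp := hyp_sum k α β γ ι hk0 hcard hres
  have hsw := switch_sum (gT k) (2*Real.pi/k) (by positivity) (gT_bound k hk0) α (lam*k+2) β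
  have hl := two_le_log hk16
  have hkr : (0:ℝ) < k := by exact_mod_cast hk0
  set L := Real.log k with hL
  have hL0 : 0 < L := by linarith
  have hβD : (β:ℝ) ≤ C₃ * k * L^D := by
    refine hβk.trans ?_
    gcongr
    rw [← Real.rpow_natCast]
    exact Real.rpow_le_rpow_of_exponent_le (by linarith) (Nat.le_ceil d₃)
  have hLβ : L ≤ Real.log β := Real.log_le_log hkr (by exact_mod_cast hkβ)
  have hLD : 1 ≤ L^D := one_le_pow₀ (by linarith)
  -- bound on gamma
  have hγb : (γ:ℝ) ≤ 20 * C₃ * L^(D+1) := by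
    have h1 : γ * k.totient ≤ β := by
      calc γ * k.totient ≤ γ * k.totient + ι := by omega
        _ = _ := hcard.symm
        _ ≤ (Finset.Icc α β).card := Finset.card_filter_le _ _
        _ ≤ β := by rw [Nat.card_Icc]; omega
    have h1' : (γ:ℝ) * k.totient ≤ β := by exact_mod_cast h1
    have h2 := totient_lower k hk16
    have h3 : (k.totient:ℝ) ≤ k := by exact_mod_cast Nat.totient_le k
    have h4 : (k:ℝ) * k ≤ k * (20 * L * k.totient) := by
      have : (k.totient:ℝ)^2 ≤ k * k.totient := by
        rw [sq]; exact mul_le_mul_of_nonneg_right h3 (by positivity)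
      calc (k:ℝ) * k = k^2 := by ring
        _ ≤ _ := h2
        _ ≤ 20 * L * (k * k.totient) := by gcongr
        _ = _ := by ring
    have h5 := le_of_mul_le_mul_left h4 hkr
    have h6 : (k:ℝ) * γ ≤ k * (20 * C₃ * L^(D+1)) := by
      calc (k:ℝ) * γ ≤ (20 * L * k.totient) * γ := by gcongr
        _ = 20 * L * (γ * k.totient) := by ring
        _ ≤ 20 * L * (C₃ * k * L^D) := mul_le_mul_of_nonneg_left (h1'.trans hβD) (by positivity)
        _ = _ := by ring
    exact le_of_mul_le_mul_left h6 hkr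
  have hαb : |(α:ℝ) - (lam*k+2 : ℕ)| + 1 ≤ C₁ * (k:ℝ)^((1:ℝ)-d₁) + 3 := by
    have : (α:ℝ) - (lam*k+2 : ℕ) = ((α:ℝ) - lam*k) - 2 := by push_cast; ring
    rw [this]
    have h2 := abs_sub ((α:ℝ) - lam*k) 2
    rw [abs_two] at h2
    linarith
  set h := 2*Real.pi/k with hh
  have hh0 : 0 ≤ h := by positivity
  set y : ℝ := (k:ℝ)^(-1:ℝ) with hy
  have hyk : y = (k:ℝ)⁻¹ := Real.rpow_neg_one _
  have hy0 : 0 < y := by positivity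
  have hky : k * y = 1 := by rw [hyk]; field_simp
  have hy1 : y ≤ 1 := by
    rw [hyk]; apply inv_le_one_of_one_le₀; exact_mod_cast hk0
  have hhy : h ≤ 7 * y := by
    rw [hh, hyk, div_eq_mul_inv]
    gcongr
    have := Real.pi_lt_d2
    linarith
  have hk1 : (k:ℝ)^((1:ℝ)-d₁) * y = (k:ℝ)^(-d₁) := by
    rw [hy, ← Real.rpow_add hkr]; congr 1; ring
  have hk2 : (k:ℝ)^((1:ℝ)-d₂) * y = (k:ℝ)^(-d₂) := by
    rw [hy, ← Real.rpow_add hkr]; congr 1; ring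
  set z₁ := (k:ℝ)^((1:ℝ)-d₁)
  set z₂ := (k:ℝ)^((1:ℝ)-d₂)
  have hz₁ : 0 ≤ z₁ := by positivity
  have hz₂ : 0 ≤ z₂ := by positivity
  have hE : 2 * (C * (β / (Real.log β)^(2*D+3))) * (2 * h + β * h^2) ≤ K * (L^3)⁻¹ := by
    have e1 : β / (Real.log β)^(2*D+3) ≤ C₃ * k * L^D / L^(2*D+3) := by
      gcongr
    have e2 : 2 * h + β * h^2 ≤ (14 + 49 * C₃) * L^D * y := by
      have e3 : β * h^2 ≤ (C₃ * k * L^D) * (7*y)^2 := by gcongr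
      have e4 : (C₃ * k * L^D) * (7*y)^2 = 49 * C₃ * L^D * y * (k * y) := by ring
      rw [e4, hky] at e3
      have e6 := mul_le_mul_of_nonneg_right hLD hy0.le
      have e7 : (14 + 49 * C₃) * L^D * y = 14 * (L^D * y) + 49 * C₃ * L^D * y * 1 := by ring
      rw [e7]
      linarith
    have e5 : 0 ≤ C₃ * k * L^D / L^(2*D+3) := by positivity
    calc _ ≤ 2 * (C * (C₃ * k * L^D / L^(2*D+3))) * ((14 + 49 * C₃) * L^D * y) := by gcongr
      _ = K * (L^D * L^D / L^(2*D+3)) * (k * y) := by rw [hK]; ring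
      _ = K * (L^3)⁻¹ := by
        rw [hky, mul_one]
        congr 1
        rw [show L^(2*D+3) = L^D * L^D * L^3 by ring]
        field_simp
  have hfin : 1/(32*((lam:ℝ)+2)*L^2) ≤ 5*h^2 + K * (L^3)⁻¹ + h * (C₁ * z₁ + 3) + h * (ι + γ) := by
    have h1 := (abs_le.1 hsw).1
    have h2 := (abs_le.1 hhyp).2
    have h3 := mul_le_mul_of_nonneg_left hαb hh0
    linarith
  have hfin2 : 1/(32*((lam:ℝ)+2)*L^2) ≤ 245 * y + K * (L^3)⁻¹ + 7 * y * (C₁ * z₁ + 3)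
      + 7 * y * (C₂ * z₂ + 20 * C₃ * L^(D+1)) := by
    have h1 : 5 * h^2 ≤ 245 * y := by
      calc 5 * h^2 ≤ 5 * (7*y)^2 := by gcongr
        _ = 245 * y * y := by ring
        _ ≤ 245 * y * 1 := by gcongr
        _ = _ := mul_one _
    have h2 : h * (C₁ * z₁ + 3) ≤ 7 * y * (C₁ * z₁ + 3) := by gcongr
    have h3 : h * (ι + γ) ≤ 7 * y * (C₂ * z₂ + 20 * C₃ * L^(D+1)) := by gcongr
    linarith
  have hfin3 := mul_le_mul_of_nonneg_right hfin2 (by positivity : 0 ≤ L^2)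
  have e1 : 1/(32*((lam:ℝ)+2)*L^2) * L^2 = c := by rw [hc]; field_simp
  have e2 : (245 * y + K * (L^3)⁻¹ + 7 * y * (C₁ * z₁ + 3)
      + 7 * y * (C₂ * z₂ + 20 * C₃ * L^(D+1))) * L^2
      = 245 * (L^2 * y) + K * L⁻¹ + 7 * C₁ * (L^2 * (k:ℝ)^(-d₁)) + 21 * (L^2 * y)
      + 7 * C₂ * (L^2 * (k:ℝ)^(-d₂)) + 140 * C₃ * (L^(D+3) * y) := by
    rw [← hk1, ← hk2]
    have : (L^3)⁻¹ * L^2 = L⁻¹ := by field_simp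
    linear_combination K * this
  rw [e1, e2] at hfin3
  exact absurd hsmall (not_lt.2 hfin3)
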